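/- arXiv:2303.17936 — 2 statements merged into one kernel-verified Lean document; each statement's English description precedes it below -/
import Mathlib

section
/- The weight-four modular form 𝒟 = (𝒫̃² − 𝒬)/64 on Γ₀(2) satisfies the third-order nonlinear ODE: for every τ ∈ ℍ, 4𝒟⁴(𝒟''')² − 6𝒟²𝒟'(6𝒟𝒟'' − 5(𝒟')²)𝒟''' + 16𝒟³(𝒟'')³ − 𝒟²(256𝒟³ − 21(𝒟')²)(𝒟'')² + 20𝒟(𝒟')²(32𝒟³ − 3(𝒟')²)𝒟'' + 25(𝒟')⁶ − 400𝒟³(𝒟')⁴ = 0. -/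
open Complex

noncomputable section

/-- The normalized derivative `F' = (2πi)⁻¹ dF/dτ`. -/
def nderiv (F : ℂ → ℂ) : ℂ → ℂ := fun τ => (2 * Real.pi * Complex.I)⁻¹ * deriv F τ

/-- `q = e^{2πiτ}`. -/
def qq (τ : ℂ) : ℂ := Complex.exp (2 * Real.pi * Complex.I * τ)

/-- The level-two Eisenstein series `𝒬(τ) = 1 + 16 Σ_{n≥1} (−1)ⁿ n³ qⁿ/(1−qⁿ)`. -/
def EQ : ℂ → ℂ := fun τ =>
  1 + 16 * ∑' n : ℕ, (-1 : ℂ) ^ (n + 1) * ((n : ℂ) + 1) ^ 3 * qq τ ^ (n + 1) / (1 - qq τ ^ (n + 1))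

/-- The level-two modular form `𝒫̃(τ) = 1 + 24 Σ_{n≥1} n qⁿ/(1+qⁿ)`. -/
def EPt : ℂ → ℂ := fun τ =>
  1 + 24 * ∑' n : ℕ, ((n : ℂ) + 1) * qq τ ^ (n + 1) / (1 + qq τ ^ (n + 1))

/-- The weight-four modular form `𝒟 = (𝒫̃² − 𝒬)/64` on `Γ₀(2)`. -/
def ED : ℂ → ℂ := fun τ => (EPt τ ^ 2 - EQ τ) / 64

/-! Let `𝒫 = (2 𝒫̃ + E₂) / 3`. The Ramamani system
`𝒫' = (𝒫² - 𝒬) / 4`, `𝒫̃' = (𝒫 𝒫̃ - 𝒬) / 2`, `𝒬' = (𝒫 - 𝒫̃) 𝒬`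
gives `𝒟' = 𝒫 𝒟`, so `𝒟'` and the next two derivatives are polynomials in `𝒫`, `𝒫̃`, `𝒬`, and the
differential equation becomes a polynomial identity. The system itself says that three modular forms
on `Γ₀(2)` of weight at most six, built with the Serre derivative, vanish. A form on `Γ₀(2)` that
vanishes at both cusps has traces to level one that are cusp forms of weight less than twelve, hence
zero; doing this for `f`, `f 𝒫̃` and `f 𝒫̃²` forces `f = 0`, because `𝒫̃` takes different values at
the two cusps. -/

open UpperHalfPlane hiding I
open Filter Derivative ModularGroup CongruenceSubgroup
open EisensteinSeries (E2)
open ModularForm (E₄)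
open scoped Manifold MatrixGroups ModularForm Topology

/-! ### Growth and limits at `i∞` -/

lemma eq_zero_of_levelOne_of_tendsto_zero {k : ℤ} {f : ℍ → ℂ} (hk : k < 12) (hf : MDiff f)
    (hS : f ∣[k] S = f) (hT : f ∣[k] T = f) (hlim : Tendsto f atImInfty (𝓝 0)) : f = 0 := by
  have hinv := SlashInvariantForm.slash_action_generators_SL2Z hS hT
  let F : CuspForm 𝒮ℒ k :=
    { toFun := f
      slash_action_eq' := by
        rintro _ ⟨γ, rfl⟩
        exact hinv γ
      holo' := hf
      zero_at_cusps' := fun hc ↦ by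
        rw [Subgroup.IsArithmetic.isCusp_iff_isCusp_SL2Z] at hc
        refine (OnePoint.isZeroAt_iff_forall_SL2Z hc).mpr fun γ _ ↦ ?_
        rw [hinv]
        exact hlim }
  have hF : F = 0 :=
    rank_zero_iff_forall_zero.mp (CuspForm.rank_eq_zero_of_weight_lt_twelve hk) F
  exact congrArg (fun G : CuspForm 𝒮ℒ k ↦ (G : ℍ → ℂ)) hF

lemma tendsto_normalizedDerivOfComplex_atImInfty {f : ℍ → ℂ} {a : ℂ} (hf : MDiff f)
    (hlim : Tendsto f atImInfty (𝓝 a)) : Tendsto (D f) atImInfty (𝓝 0) := by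
  suffices IsZeroAtImInfty fun z : ℍ ↦ deriv (f ∘ ofComplex) z by
    rw [← mul_zero (2 * Real.pi * Complex.I)⁻¹]
    exact this.const_mul _
  have hfa : IsZeroAtImInfty fun z ↦ f z - a := by
    simpa [IsZeroAtImInfty, ZeroAtFilter] using hlim.sub_const a
  rw [isZeroAtImInfty_iff] at hfa ⊢
  intro ε hε
  obtain ⟨A, hA⟩ := hfa ε hε
  refine ⟨max A 0 + 2, fun z hz ↦ ?_⟩
  have him : ∀ w ∈ Metric.closedBall (z : ℂ) 1, max A 0 < w.im := fun w hw ↦ by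
    have hw' := (abs_le.mp ((abs_im_le_norm _).trans (mem_closedBall_iff_norm.mp hw))).1
    rw [sub_im, coe_im] at hw'
    linarith
  have hsub : Metric.closedBall (z : ℂ) 1 ⊆ upperHalfPlaneSet :=
    fun w hw ↦ (le_max_right A 0).trans_lt (him w hw)
  have hdiff : DiffContOnCl ℂ (fun w ↦ (f ∘ ofComplex) w - a) (Metric.ball (z : ℂ) 1) := by
    refine DifferentiableOn.diffContOnCl ?_
    rw [closure_ball _ one_ne_zero]
    exact ((UpperHalfPlane.mdifferentiable_iff.mp hf).mono hsub).sub_const a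
  have hbound : ∀ w ∈ Metric.sphere (z : ℂ) 1, ‖(f ∘ ofComplex) w - a‖ ≤ ε := fun w hw ↦ by
    have hw' := Metric.sphere_subset_closedBall hw
    rw [Function.comp_apply, ofComplex_apply_of_im_pos (hsub hw')]
    exact hA ⟨w, hsub hw'⟩ ((le_max_left A 0).trans (him w hw').le)
  simpa [Function.comp_def] using norm_deriv_le_of_forall_mem_sphere_norm_le one_pos hdiff hbound

lemma tendsto_atImInfty_of_hasSum_qExpansion {f : ℍ → ℂ} {c : ℕ → ℂ} {h : ℝ} (hh : 0 < h)
    (hf : ∀ z : ℍ, HasSum (fun m ↦ c m • Function.Periodic.qParam h z ^ m) (f z)) :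
    Tendsto f atImInfty (𝓝 (c 0)) := by
  set q : ℍ → ℂ := fun z ↦ Function.Periodic.qParam h z
  have hq : ∀ z, q z ≠ 0 := fun z ↦ Function.Periodic.qParam_ne_zero _
  let g : ℍ → ℂ := fun z ↦ (f z - c 0) / q z
  have hg : ∀ z, HasSum (fun m ↦ c (m + 1) • q z ^ m) (g z) := fun z ↦ by
    have htail := ((hasSum_nat_add_iff' 1).mpr (hf z)).div_const (q z)
    simp only [Finset.range_one, Finset.sum_singleton, pow_zero, smul_eq_mul, mul_one] at htail
    refine htail.congr_fun fun m ↦ ?_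
    rw [smul_eq_mul, pow_succ, ← mul_assoc, mul_div_cancel_right₀ _ (hq z)]
  have hg_bdd : g =O[atImInfty] (1 : ℍ → ℝ) := isBoundedAtImInfty_of_hasSum_qExpansion hh hg
  have hq_lim : Tendsto (fun z ↦ (1 : ℍ → ℝ) z * ‖q z‖) atImInfty (𝓝 0) := by
    simpa using (qParam_tendsto_atImInfty hh).norm
  have hgq : Tendsto (fun z ↦ g z * q z) atImInfty (𝓝 0) :=
    (hg_bdd.mul (Asymptotics.isBigO_refl q atImInfty).norm_right).trans_tendsto hq_lim
  simpa [g, hq] using hgq.add_const (c 0)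

lemma tendsto_E2_atImInfty : Tendsto E2 atImInfty (𝓝 1) := by
  have hlim := tendsto_atImInfty_of_hasSum_qExpansion (f := E2) one_pos fun z ↦ by
    simpa only [Function.Periodic.qParam, ofReal_one, div_one] using
      EisensteinSeries.hasSum_qExpansion_E2 (z := z)
  rwa [if_pos rfl] at hlim

lemma tendsto_E₄_atImInfty : Tendsto E₄ atImInfty (𝓝 1) := by
  rw [← EisensteinSeries.E_qExpansion_coeff_zero (k := 4) (by norm_num) (by decide)]
  exact tendsto_atImInfty_of_hasSum_qExpansion one_pos
    (ModularForm.hasSum_qExpansion E₄ one_pos one_mem_strictPeriods_SL)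

lemma tendsto_serreDerivative_atImInfty {f : ℍ → ℂ} {a : ℂ} (k : ℂ) (hf : MDiff f)
    (hlim : Tendsto f atImInfty (𝓝 a)) :
    Tendsto (serreDerivative k f) atImInfty (𝓝 (-(k / 12 * a))) := by
  have hD := tendsto_normalizedDerivOfComplex_atImInfty hf hlim
  simpa [div_eq_mul_inv] using hD.sub ((tendsto_E2_atImInfty.const_mul (k * 12⁻¹)).mul hlim)

lemma tendsto_slash_atImInfty {f : ℍ → ℂ} {a : ℂ} {g : GL (Fin 2) ℝ} (k : ℤ)
    (hdet : 0 < g.det.val) (hg : g 1 0 = 0) (hf : Tendsto f atImInfty (𝓝 a)) :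
    Tendsto (f ∣[k] g) atImInfty (𝓝 (a * g.det.val ^ (k - 1) * g 1 1 ^ (-k))) := by
  have hslash : f ∣[k] g = fun z ↦ f (g • z) * g.det.val ^ (k - 1) * g 1 1 ^ (-k) := by
    ext z
    have hσ : σ g (f (g • z)) = f (g • z) := by
      rw [σ, if_pos hdet, ContinuousAlgEquiv.refl_apply]
    rw [ModularForm.slash_apply, hσ, abs_of_pos hdet, denom, hg, ofReal_zero, zero_mul, zero_add]
  rw [hslash]
  exact ((hf.comp (tendsto_smul_atImInfty hg)).mul_const _).mul_const _

lemma tendsto_slash_T_atImInfty {f : ℍ → ℂ} {a : ℂ} (k : ℤ) (hf : Tendsto f atImInfty (𝓝 a)) :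
    Tendsto (f ∣[k] T) atImInfty (𝓝 a) := by
  rw [ModularForm.SL_slash]
  simpa [coe_T] using tendsto_slash_atImInfty (g := T) k (by simp) (by simp [coe_T]) hf

/-! ### Modular forms on `Γ₀(2)` and their values at the cusps -/

/-- `f` is a holomorphic modular form of weight `k` on `Γ`, taking the value `a` at the cusp `∞` and
the value `b` at the cusp `0`; the latter is encoded as the limit of `f ∣[k] S` at `i∞`. For
`Γ = Γ₀(p)` with `p` prime, these are all the cusps. -/
structure HasCuspValues (Γ : Subgroup SL(2, ℤ)) (k : ℤ) (f : ℍ → ℂ) (a b : ℂ) : Prop where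
  mdifferentiable : MDiff f
  slash_eq : ∀ γ ∈ Γ, f ∣[k] γ = f
  tendsto_infty : Tendsto f atImInfty (𝓝 a)
  tendsto_zero : Tendsto (f ∣[k] S) atImInfty (𝓝 b)

namespace HasCuspValues

variable {Γ : Subgroup SL(2, ℤ)} {k l m : ℤ} {f g x : ℍ → ℂ} {a b c d : ℂ}

lemma add (hf : HasCuspValues Γ k f a b) (hg : HasCuspValues Γ k g c d) :
    HasCuspValues Γ k (f + g) (a + c) (b + d) where
  mdifferentiable := hf.mdifferentiable.add hg.mdifferentiable
  slash_eq γ hγ := by rw [SlashAction.add_slash, hf.slash_eq γ hγ, hg.slash_eq γ hγ]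
  tendsto_infty := hf.tendsto_infty.add hg.tendsto_infty
  tendsto_zero := by
    rw [SlashAction.add_slash]
    exact hf.tendsto_zero.add hg.tendsto_zero

lemma const_smul (hf : HasCuspValues Γ k f a b) (c : ℂ) :
    HasCuspValues Γ k (c • f) (c * a) (c * b) where
  mdifferentiable := hf.mdifferentiable.const_smul c
  slash_eq γ hγ := by rw [ModularForm.SL_smul_slash, hf.slash_eq γ hγ]
  tendsto_infty := hf.tendsto_infty.const_smul c
  tendsto_zero := by
    rw [ModularForm.SL_smul_slash]
    exact hf.tendsto_zero.const_smul c

lemma sub (hf : HasCuspValues Γ k f a b) (hg : HasCuspValues Γ k g c d) :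
    HasCuspValues Γ k (f - g) (a - c) (b - d) := by
  simpa [sub_eq_add_neg] using hf.add (hg.const_smul (-1))

lemma mul (hf : HasCuspValues Γ k f a b) (hg : HasCuspValues Γ l g c d) :
    HasCuspValues Γ (k + l) (f * g) (a * c) (b * d) where
  mdifferentiable := hf.mdifferentiable.mul hg.mdifferentiable
  slash_eq γ hγ := by rw [ModularForm.mul_slash_SL2, hf.slash_eq γ hγ, hg.slash_eq γ hγ]
  tendsto_infty := hf.tendsto_infty.mul hg.tendsto_infty
  tendsto_zero := by
    rw [ModularForm.mul_slash_SL2]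
    exact hf.tendsto_zero.mul hg.tendsto_zero

lemma serreDerivative (hf : HasCuspValues Γ k f a b) :
    HasCuspValues Γ (k + 2) (serreDerivative k f) (-(k / 12 * a)) (-(k / 12 * b)) where
  mdifferentiable := serreDerivative_mdifferentiable k hf.mdifferentiable
  slash_eq γ hγ := serreDerivative_slash_invariant hf.mdifferentiable (hf.slash_eq γ hγ)
  tendsto_infty := tendsto_serreDerivative_atImInfty k hf.mdifferentiable hf.tendsto_infty
  tendsto_zero := by
    rw [serreDerivative_slash_equivariant hf.mdifferentiable]
    exact tendsto_serreDerivative_atImInfty k (hf.mdifferentiable.slash k S) hf.tendsto_zero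

lemma of_levelOne (hf : MDiff f) (hslash : ∀ γ : SL(2, ℤ), f ∣[k] γ = f)
    (hlim : Tendsto f atImInfty (𝓝 a)) : HasCuspValues Γ k f a a where
  mdifferentiable := hf
  slash_eq γ _ := hslash γ
  tendsto_infty := hlim
  tendsto_zero := by rwa [hslash S]

/-- The trace from `Γ₀(2)` to `SL(2, ℤ)`: the coset representatives are `1`, `S` and `S * T`. -/
lemma trace_eq_zero (hk : k < 12) (hf : HasCuspValues (Gamma0 2) k f 0 0) :
    f + f ∣[k] S + (f ∣[k] S) ∣[k] T = 0 := by
  have slash_conj (γ δ ε : SL(2, ℤ)) (h : γ * δ * ε⁻¹ ∈ Gamma0 2) :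
      (f ∣[k] γ) ∣[k] δ = f ∣[k] ε := by
    rw [← SlashAction.slash_mul, ← inv_mul_cancel_right (γ * δ) ε, SlashAction.slash_mul,
      hf.slash_eq _ h]
  have hT : f ∣[k] T = f := hf.slash_eq T (by simp [Gamma0_mem, coe_T])
  have hSS : (f ∣[k] S) ∣[k] S = f := by
    simpa using slash_conj S S 1 (by simp [Gamma0_mem, coe_S])
  have hSTS : ((f ∣[k] S) ∣[k] T) ∣[k] S = (f ∣[k] S) ∣[k] T := by
    simpa [SlashAction.slash_mul] using slash_conj (S * T) S (S * T)
      (by simp [Gamma0_mem, coe_S, coe_T, Matrix.adjugate_fin_two_of,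
        CharTwo.two_eq_zero])
  have hSTT : ((f ∣[k] S) ∣[k] T) ∣[k] T = f ∣[k] S := by
    simpa [SlashAction.slash_mul] using slash_conj (S * T) T S
      (by simp [Gamma0_mem, coe_S, coe_T, Matrix.adjugate_fin_two_of,
        CharTwo.two_eq_zero])
  have hlim := (hf.tendsto_infty.add hf.tendsto_zero).add
    (tendsto_slash_T_atImInfty k hf.tendsto_zero)
  rw [add_zero, add_zero] at hlim
  refine eq_zero_of_levelOne_of_tendsto_zero hk ?_ ?_ ?_ hlim
  · exact (hf.mdifferentiable.add (hf.mdifferentiable.slash k S)).add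
      ((hf.mdifferentiable.slash k S).slash k T)
  · rw [SlashAction.add_slash, SlashAction.add_slash, hSS, hSTS, add_comm (f ∣[k] S) f]
  · rw [SlashAction.add_slash, SlashAction.add_slash, hT, hSTT, add_right_comm]

/-- The traces of `f`, `f x` and `f x²` all vanish. They form a Vandermonde system in the conjugates
of `f`, whose determinant is built from the differences of the conjugates of `x`. -/
theorem eq_zero_of_separating (hf : HasCuspValues (Gamma0 2) k f 0 0)
    (hx : HasCuspValues (Gamma0 2) m x c d) (hcd : c ≠ d) (hm : 0 ≤ m) (hkm : k + m + m < 12) :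
    f = 0 := by
  have h0 := trace_eq_zero (by lia) hf
  have h1 := trace_eq_zero (k := k + m) (by lia) (by simpa only [zero_mul] using hf.mul hx)
  have h2 := trace_eq_zero hkm (by simpa only [zero_mul] using (hf.mul hx).mul hx)
  have hS := hx.mdifferentiable.sub (hx.mdifferentiable.slash m S)
  have hST := hx.mdifferentiable.sub ((hx.mdifferentiable.slash m S).slash m T)
  have hprod : f * ((x - x ∣[m] S) * (x - (x ∣[m] S) ∣[m] T)) = 0 := by
    simp only [ModularForm.mul_slash_SL2] at h1 h2
    linear_combination h2 - (x ∣[m] S + (x ∣[m] S) ∣[m] T) * h1 +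
      (x ∣[m] S) * ((x ∣[m] S) ∣[m] T) * h0
  have ne_zero_of_tendsto {y : ℍ → ℂ} (hy : Tendsto y atImInfty (𝓝 (c - d))) : y ≠ 0 := by
    rintro rfl
    exact sub_ne_zero.mpr hcd (tendsto_nhds_unique hy tendsto_const_nhds)
  have hS0 := ne_zero_of_tendsto (hx.tendsto_infty.sub hx.tendsto_zero)
  have hST0 := ne_zero_of_tendsto
    (hx.tendsto_infty.sub (tendsto_slash_T_atImInfty m hx.tendsto_zero))
  refine ((mul_eq_zero_iff hf.mdifferentiable (hS.mul hST)).mp hprod).resolve_right fun h ↦ ?_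
  exact ((mul_eq_zero_iff hS hST).mp h).elim hS0 hST0

theorem eq_of_separating {a' b' : ℂ} (hf : HasCuspValues (Gamma0 2) k f a b)
    (hg : HasCuspValues (Gamma0 2) k g a' b') (ha : a = a') (hb : b = b')
    (hx : HasCuspValues (Gamma0 2) m x c d) (hcd : c ≠ d) (hm : 0 ≤ m) (hkm : k + m + m < 12) :
    f = g := by
  subst ha hb
  exact sub_eq_zero.mp
    (eq_zero_of_separating (by simpa only [sub_self] using hf.sub hg) hx hcd hm hkm)

end HasCuspValues

/-! ### The quasimodularity cocycle of `E₂` -/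

/-- The normalized logarithmic derivative `(2πi)⁻¹ c / (c z + d)` of the automorphy factor `c z + d`
of `g`. It is the weight-two cocycle that measures the failure of `E₂` to be modular. -/
def denomLogDeriv (g : GL (Fin 2) ℝ) (z : ℍ) : ℂ :=
  (2 * Real.pi * Complex.I)⁻¹ * (g 1 0 / denom g z)

lemma denomLogDeriv_eq_zero {g : GL (Fin 2) ℝ} (hg : g 1 0 = 0) : denomLogDeriv g = 0 := by
  ext z
  simp [denomLogDeriv, hg]

lemma denomLogDeriv_mul (g : GL (Fin 2) ℝ) {h : GL (Fin 2) ℝ} (hh : 0 < h.det.val) :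
    denomLogDeriv (g * h) = denomLogDeriv g ∣[(2 : ℤ)] h + denomLogDeriv h := by
  ext z
  have hσ (w : ℂ) : σ h w = w := by rw [σ, if_pos hh, ContinuousAlgEquiv.refl_apply]
  have hdet : (h.det.val : ℂ) = h 0 0 * h 1 1 - h 0 1 * h 1 0 := by
    rw [Matrix.GeneralLinearGroup.val_det_apply, Matrix.det_fin_two]
    push_cast
    rfl
  have hgh : (g * h) 1 0 = g 1 0 * h 0 0 + g 1 1 * h 1 0 := by
    simp [Matrix.mul_apply, Fin.sum_univ_two]
  have hcoc := denom_cocycle g h z.im_ne_zero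
  have hg0 : denom g (num h z / denom h z) ≠ 0 := by
    rw [← coe_smul_of_det_pos hh]
    exact denom_ne_zero g (h • z)
  have hh0 := denom_ne_zero h z
  have hgnum : denom g (num h z / denom h z) * denom h z = g 1 0 * num h z + g 1 1 * denom h z := by
    rw [denom]
    field_simp
  have hdet_denom : h.det.val = h 0 0 * denom h z - h 1 0 * num h z := by
    rw [hdet, denom, num]
    ring
  simp only [denomLogDeriv, Pi.add_apply, ModularForm.slash_apply, hσ, abs_of_pos hh, hcoc, hgh,
    coe_smul_of_det_pos hh, hdet_denom]
  push_cast
  field_simp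
  linear_combination -(h 1 0 : ℂ) * hgnum

lemma E2_slash_eq_add_denomLogDeriv (γ : SL(2, ℤ)) :
    E2 ∣[(2 : ℤ)] γ = E2 + (12 : ℂ) • denomLogDeriv γ := by
  have hπ : (Real.pi : ℂ) ≠ 0 := ofReal_ne_zero.mpr Real.pi_ne_zero
  have hconst : -(1 / (2 * (Real.pi ^ 2 / 6 : ℂ))) * (2 * Real.pi * Complex.I) =
      12 * (2 * Real.pi * Complex.I)⁻¹ := by
    field_simp
    rw [I_sq]
    norm_num
  rw [EisensteinSeries.E2_slash_action, riemannZeta_two, sub_eq_add_neg, ← _root_.neg_smul]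
  congr 1
  ext z
  simp only [EisensteinSeries.D2, denomLogDeriv, Pi.smul_apply, smul_eq_mul, ← mul_assoc, ← hconst,
    mul_div_assoc]
  simp

lemma normalizedDerivOfComplex_denomLogDeriv (g : GL (Fin 2) ℝ) :
    D (denomLogDeriv g) = -(denomLogDeriv g * denomLogDeriv g) := by
  ext z
  have hcomp : (denomLogDeriv g ∘ ofComplex) =ᶠ[𝓝 ↑z]
      fun w ↦ (2 * Real.pi * Complex.I)⁻¹ * (g 1 0 * denom g w ^ (-1 : ℤ)) := by
    filter_upwards [isOpen_upperHalfPlaneSet.mem_nhds z.im_pos] with w hw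
    rw [Function.comp_apply, ofComplex_apply_of_im_pos hw, denomLogDeriv, zpow_neg_one,
      div_eq_mul_inv]
  have hderiv := ((hasDerivAt_denom_zpow g (-1) z).const_mul (g 1 0 : ℂ)).const_mul
    (2 * Real.pi * Complex.I)⁻¹
  rw [normalizedDerivOfComplex, (hderiv.congr_of_eventuallyEq hcomp).deriv]
  simp only [denomLogDeriv, Pi.neg_apply, Pi.mul_apply]
  rw [Int.cast_neg, Int.cast_one, zpow_sub_one₀ (denom_ne_zero g z), zpow_neg_one]
  ring

lemma E2_slash_sub_E2_slash {A B : GL (Fin 2) ℝ} {γ γ' : SL(2, ℤ)} (hA : A 1 0 = 0)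
    (hB : B 1 0 = 0) (hB_det : 0 < B.det.val) (h : A * (γ : GL (Fin 2) ℝ) = γ' * B) :
    (E2 ∣[(2 : ℤ)] A - E2) ∣[(2 : ℤ)] γ =
      E2 ∣[(2 : ℤ)] B - E2 := by
  have hcocycle : denomLogDeriv γ' ∣[(2 : ℤ)] B = denomLogDeriv γ := by
    have hγ := denomLogDeriv_mul A (h := γ) (by simp)
    rw [h, denomLogDeriv_mul _ hB_det] at hγ
    simpa [denomLogDeriv_eq_zero hA, denomLogDeriv_eq_zero hB] using hγ
  have hE2A : (E2 ∣[(2 : ℤ)] A) ∣[(2 : ℤ)] γ =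
      E2 ∣[(2 : ℤ)] B + (12 : ℂ) • denomLogDeriv γ := by
    rw [ModularForm.SL_slash, ← SlashAction.slash_mul, h, SlashAction.slash_mul,
      ← ModularForm.SL_slash, E2_slash_eq_add_denomLogDeriv, SlashAction.add_slash,
      ModularForm.smul_slash, hcocycle, σ, if_pos hB_det, ContinuousAlgEquiv.refl_apply]
  rw [sub_eq_add_neg, SlashAction.add_slash, SlashAction.neg_slash, hE2A,
    E2_slash_eq_add_denomLogDeriv]
  abel

lemma twelve_smul_D_E2_sub_sq_slash (γ : SL(2, ℤ)) :
    ((12 : ℂ) • D E2 - E2 * E2) ∣[(4 : ℤ)] γ =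
      (12 : ℂ) • D E2 - E2 * E2 := by
  set E := E2
  set w := denomLogDeriv γ
  have hE : E ∣[(2 : ℤ)] γ = E + (12 : ℂ) • w := E2_slash_eq_add_denomLogDeriv γ
  have hw : MDiff ((12 : ℂ) • w) := by
    rw [← sub_eq_of_eq_add' hE]
    exact (E2_mdifferentiable.slash 2 γ).sub E2_mdifferentiable
  have hw' : MDiff w := by
    simpa using hw.const_smul (12⁻¹ : ℂ)
  have hDE : D E ∣[(4 : ℤ)] γ = D (E ∣[(2 : ℤ)] γ) + (2 : ℂ) • (w * E ∣[(2 : ℤ)] γ) := by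
    rw [normalizedDerivOfComplex_SL_slash E2_mdifferentiable]
    ext z
    simp [w, E, denomLogDeriv, mul_assoc]
  have hDE' : D (E ∣[(2 : ℤ)] γ) = D E - (12 : ℂ) • (w * w) := by
    rw [hE, normalizedDerivOfComplex_add _ _ E2_mdifferentiable hw,
      normalizedDerivOfComplex_smul _ _ hw', normalizedDerivOfComplex_denomLogDeriv, smul_neg,
      sub_eq_add_neg]
  rw [sub_eq_add_neg, SlashAction.add_slash, SlashAction.neg_slash, ModularForm.SL_smul_slash, hDE,
    hDE', ← two_add_two_eq_four, ModularForm.mul_slash_SL2, hE]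
  ext z
  simp only [Pi.add_apply, Pi.sub_apply, Pi.neg_apply, Pi.smul_apply, Pi.mul_apply, smul_eq_mul]
  ring

lemma hasCuspValues_twelve_smul_D_E2_sub_sq (Γ : Subgroup SL(2, ℤ)) :
    HasCuspValues Γ 4 ((12 : ℂ) • D E2 - E2 * E2) (-1) (-1) := by
  refine .of_levelOne ?_ twelve_smul_D_E2_sub_sq_slash ?_
  · exact ((normalizedDerivOfComplex_mdifferentiable E2_mdifferentiable).const_smul _).sub
      (E2_mdifferentiable.mul E2_mdifferentiable)
  · have hD := tendsto_normalizedDerivOfComplex_atImInfty E2_mdifferentiable tendsto_E2_atImInfty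
    simpa [Pi.sub_def] using
      (hD.const_smul (12 : ℂ)).sub (tendsto_E2_atImInfty.mul tendsto_E2_atImInfty)

/-! ### Forms on `Γ₀(N)` from level one -/

/-- The matrix `diag(N, 1)`, acting on `ℍ` as `z ↦ N z`. -/
def scaleUp (N : ℕ) [NeZero N] : GL (Fin 2) ℝ :=
  .mkOfDetNeZero !![(N : ℝ), 0; 0, 1] (by simp [NeZero.ne])

/-- The matrix `diag(1, N)`, acting on `ℍ` as `z ↦ z / N`. -/
def scaleDown (N : ℕ) [NeZero N] : GL (Fin 2) ℝ :=
  .mkOfDetNeZero !![1, 0; 0, (N : ℝ)] (by simp [NeZero.ne])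

section Scaling

variable (N : ℕ) [NeZero N]

@[simp]
lemma coe_scaleUp : (scaleUp N : Matrix (Fin 2) (Fin 2) ℝ) = !![(N : ℝ), 0; 0, 1] := rfl

@[simp]
lemma coe_scaleDown : (scaleDown N : Matrix (Fin 2) (Fin 2) ℝ) = !![1, 0; 0, (N : ℝ)] := rfl

lemma det_scaleUp_pos : 0 < (scaleUp N).det.val := by
  simp [NeZero.pos]

lemma det_scaleDown_pos : 0 < (scaleDown N).det.val := by
  simp [NeZero.pos]

lemma coe_scaleUp_smul (z : ℍ) : ((scaleUp N • z : ℍ) : ℂ) = N * z := by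
  rw [coe_smul_of_det_pos (det_scaleUp_pos N)]
  simp [num, denom]

lemma scaleUp_mul_S : scaleUp N * (S : GL (Fin 2) ℝ) = S * scaleDown N := by
  ext i j
  fin_cases i <;> fin_cases j <;>
    simp [coe_S, Matrix.mul_apply, Fin.sum_univ_two]

variable {N}

lemma exists_scaleUp_mul_eq {γ : SL(2, ℤ)} (hγ : γ ∈ Gamma0 N) :
    ∃ γ' : SL(2, ℤ), scaleUp N * (γ : GL (Fin 2) ℝ) = γ' * scaleUp N := by
  obtain ⟨c, hc⟩ := (ZMod.intCast_zmod_eq_zero_iff_dvd _ _).mp (Gamma0_mem.mp hγ)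
  obtain ⟨γ', hγ'⟩ : ∃ γ' : SL(2, ℤ),
      (γ' : Matrix (Fin 2) (Fin 2) ℤ) = !![γ 0 0, N * γ 0 1; c, γ 1 1] := by
    have hdet := γ.det_coe
    rw [Matrix.det_fin_two, hc] at hdet
    refine ⟨⟨_, ?_⟩, rfl⟩
    rw [Matrix.det_fin_two_of]
    linear_combination hdet
  refine ⟨γ', ?_⟩
  ext i j
  fin_cases i <;> fin_cases j <;>
    simp [Matrix.mul_apply, Fin.sum_univ_two, hγ', hc, mul_comm]

lemma slash_scaleUp_apply (f : ℍ → ℂ) (k : ℤ) (z : ℍ) :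
    (f ∣[k] scaleUp N) z = N ^ (k - 1) * f (scaleUp N • z) := by
  rw [ModularForm.slash_apply, σ, if_pos (det_scaleUp_pos N), ContinuousAlgEquiv.refl_apply,
    abs_of_pos (det_scaleUp_pos N)]
  simp [denom, mul_comm]

variable {f : ℍ → ℂ} {k : ℤ} {a : ℂ}

lemma tendsto_slash_scaleUp (hf : Tendsto f atImInfty (𝓝 a)) :
    Tendsto (f ∣[k] scaleUp N) atImInfty (𝓝 (a * N ^ (k - 1))) := by
  have hlim := tendsto_slash_atImInfty (g := scaleUp N) k
    (det_scaleUp_pos N) (by simp) hf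
  simpa using hlim

lemma tendsto_slash_scaleDown (hf : Tendsto f atImInfty (𝓝 a)) :
    Tendsto (f ∣[k] scaleDown N) atImInfty (𝓝 (a / N)) := by
  have hlim := tendsto_slash_atImInfty (g := scaleDown N) k
    (det_scaleDown_pos N) (by simp) hf
  have hN : (N : ℂ) ≠ 0 := NeZero.ne _
  have hval : a / N = a * (N : ℂ) ^ (k - 1) * (N : ℂ) ^ (-k) := by
    rw [zpow_sub_one₀ hN, zpow_neg]
    field_simp
  rw [hval]
  simpa using hlim

lemma hasCuspValues_slash_scaleUp (hf : MDiff f) (hslash : ∀ γ : SL(2, ℤ), f ∣[k] γ = f)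
    (hlim : Tendsto f atImInfty (𝓝 a)) :
    HasCuspValues (Gamma0 N) k (f ∣[k] scaleUp N) (a * N ^ (k - 1)) (a / N) where
  mdifferentiable := hf.slash k (scaleUp N)
  slash_eq γ hγ := by
    obtain ⟨γ', h⟩ := exists_scaleUp_mul_eq hγ
    rw [ModularForm.SL_slash, ← SlashAction.slash_mul, h, SlashAction.slash_mul,
      ← ModularForm.SL_slash, hslash]
  tendsto_infty := tendsto_slash_scaleUp hlim
  tendsto_zero := by
    rw [ModularForm.SL_slash, ← SlashAction.slash_mul, scaleUp_mul_S, SlashAction.slash_mul,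
      ← ModularForm.SL_slash, hslash]
    exact tendsto_slash_scaleDown hlim

lemma hasCuspValues_E2_slash_scaleUp_sub :
    HasCuspValues (Gamma0 N) 2 (E2 ∣[(2 : ℤ)] scaleUp N - E2) (N - 1) (1 / N - 1) where
  mdifferentiable := (E2_mdifferentiable.slash 2 (scaleUp N)).sub E2_mdifferentiable
  slash_eq γ hγ := by
    obtain ⟨γ', h⟩ := exists_scaleUp_mul_eq hγ
    exact E2_slash_sub_E2_slash (by simp) (by simp)
      (det_scaleUp_pos N) h
  tendsto_infty := by
    simpa [Pi.sub_def] using (tendsto_slash_scaleUp (k := 2) (N := N) tendsto_E2_atImInfty).sub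
      tendsto_E2_atImInfty
  tendsto_zero := by
    rw [E2_slash_sub_E2_slash (by simp) (by simp)
      (det_scaleDown_pos N) (scaleUp_mul_S N)]
    exact (tendsto_slash_scaleDown tendsto_E2_atImInfty).sub tendsto_E2_atImInfty

end Scaling

/-! ### The Ramamani system -/

/-- Ramamani's weight-two form `𝒫̃`, on the upper half-plane. -/
def ramamaniPt : ℍ → ℂ := E2 ∣[(2 : ℤ)] scaleUp 2 - E2

/-- Ramamani's weight-four form `𝒬`, on the upper half-plane. -/
def ramamaniQ : ℍ → ℂ := (15 : ℂ)⁻¹ • ((2 : ℂ) • ⇑E₄ ∣[(4 : ℤ)] scaleUp 2 - ⇑E₄)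

/-- Ramamani's quasimodular form `𝒫`, which completes `𝒫̃` and `𝒬` to a triple closed under
differentiation. -/
def ramamaniP : ℍ → ℂ := (3 : ℂ)⁻¹ • ((2 : ℂ) • ramamaniPt + E2)

/-- The weight-four form `𝒟`, on the upper half-plane. -/
def ramamaniD : ℍ → ℂ := (64 : ℂ)⁻¹ • (ramamaniPt * ramamaniPt - ramamaniQ)

lemma hasCuspValues_ramamaniPt : HasCuspValues (Gamma0 2) 2 ramamaniPt 1 (-1 / 2) := by
  convert hasCuspValues_E2_slash_scaleUp_sub (N := 2) using 1
  all_goals norm_num [ramamaniPt]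

lemma hasCuspValues_ramamaniQ : HasCuspValues (Gamma0 2) 4 ramamaniQ 1 0 := by
  have hE₄ (γ : SL(2, ℤ)) : ⇑E₄ ∣[(4 : ℤ)] γ = E₄ := E₄.slash_action_eq' _ ⟨γ, rfl⟩
  have hE₄_up := hasCuspValues_slash_scaleUp (N := 2) E₄.holo' hE₄ tendsto_E₄_atImInfty
  have hE₄_one := HasCuspValues.of_levelOne (Γ := Gamma0 2) E₄.holo' hE₄ tendsto_E₄_atImInfty
  convert ((hE₄_up.const_smul 2).sub hE₄_one).const_smul 15⁻¹ using 1
  all_goals norm_num [ramamaniQ]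

lemma eq_of_levelTwo_cuspValues_eq {k : ℤ} {f g : ℍ → ℂ} {a b a' b' : ℂ} (hk : k < 8)
    (hf : HasCuspValues (Gamma0 2) k f a b) (hg : HasCuspValues (Gamma0 2) k g a' b')
    (ha : a = a') (hb : b = b') : f = g :=
  hf.eq_of_separating hg ha hb hasCuspValues_ramamaniPt (by norm_num) (by norm_num) (by lia)

lemma serreDerivative_ramamaniPt :
    serreDerivative (2 : ℤ) ramamaniPt =
      (3 : ℂ)⁻¹ • (ramamaniPt * ramamaniPt) - (2 : ℂ)⁻¹ • ramamaniQ := by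
  have hP := hasCuspValues_ramamaniPt
  exact eq_of_levelTwo_cuspValues_eq (by norm_num) hP.serreDerivative
    (((hP.mul hP).const_smul 3⁻¹).sub (hasCuspValues_ramamaniQ.const_smul 2⁻¹))
    (by norm_num) (by norm_num)

lemma serreDerivative_ramamaniQ :
    serreDerivative (4 : ℤ) ramamaniQ = (-3 : ℂ)⁻¹ • (ramamaniPt * ramamaniQ) := by
  have hQ := hasCuspValues_ramamaniQ
  exact eq_of_levelTwo_cuspValues_eq (by norm_num) hQ.serreDerivative
    ((hasCuspValues_ramamaniPt.mul hQ).const_smul (-3)⁻¹) (by norm_num) (by norm_num)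

lemma twelve_smul_D_E2_sub_sq :
    (12 : ℂ) • D E2 - E2 * E2 = (3 : ℂ) • ramamaniQ - (4 : ℂ) • (ramamaniPt * ramamaniPt) := by
  have hP := hasCuspValues_ramamaniPt
  exact eq_of_levelTwo_cuspValues_eq (by norm_num) (hasCuspValues_twelve_smul_D_E2_sub_sq _)
    ((hasCuspValues_ramamaniQ.const_smul 3).sub ((hP.mul hP).const_smul 4))
    (by norm_num) (by norm_num)

lemma mdifferentiable_ramamaniPt : MDiff ramamaniPt := hasCuspValues_ramamaniPt.mdifferentiable

lemma mdifferentiable_ramamaniQ : MDiff ramamaniQ := hasCuspValues_ramamaniQ.mdifferentiable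

lemma mdifferentiable_ramamaniP : MDiff ramamaniP :=
  ((mdifferentiable_ramamaniPt.const_smul _).add E2_mdifferentiable).const_smul _

lemma mdifferentiable_ramamaniD : MDiff ramamaniD :=
  ((mdifferentiable_ramamaniPt.mul mdifferentiable_ramamaniPt).sub
    mdifferentiable_ramamaniQ).const_smul _

lemma D_ramamaniPt : D ramamaniPt = (2 : ℂ)⁻¹ • (ramamaniP * ramamaniPt - ramamaniQ) := by
  ext z
  have h := congrFun serreDerivative_ramamaniPt z
  simp only [serreDerivative_apply, Int.cast_ofNat, Pi.sub_apply, Pi.smul_apply, Pi.mul_apply,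
    smul_eq_mul] at h
  simp only [ramamaniP, Pi.add_apply, Pi.sub_apply, Pi.smul_apply, Pi.mul_apply, smul_eq_mul]
  linear_combination h

lemma D_ramamaniQ : D ramamaniQ = (ramamaniP - ramamaniPt) * ramamaniQ := by
  ext z
  have h := congrFun serreDerivative_ramamaniQ z
  simp only [serreDerivative_apply, Int.cast_ofNat, Pi.smul_apply, Pi.mul_apply,
    smul_eq_mul] at h
  simp only [ramamaniP, Pi.add_apply, Pi.sub_apply, Pi.smul_apply, Pi.mul_apply, smul_eq_mul]
  linear_combination h

lemma D_ramamaniP : D ramamaniP = (4 : ℂ)⁻¹ • (ramamaniP * ramamaniP - ramamaniQ) := by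
  have hPt := mdifferentiable_ramamaniPt
  rw [ramamaniP, normalizedDerivOfComplex_smul _ _ ((hPt.const_smul _).add E2_mdifferentiable),
    normalizedDerivOfComplex_add _ _ (hPt.const_smul _) E2_mdifferentiable,
    normalizedDerivOfComplex_smul _ _ hPt, D_ramamaniPt]
  ext z
  have h := congrFun twelve_smul_D_E2_sub_sq z
  simp only [ramamaniP, Pi.add_apply, Pi.sub_apply, Pi.smul_apply, Pi.mul_apply,
    smul_eq_mul] at h ⊢
  linear_combination (1 / 36) * h

lemma D_ramamaniD : D ramamaniD = ramamaniP * ramamaniD := by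
  have hPt := mdifferentiable_ramamaniPt
  rw [ramamaniD, normalizedDerivOfComplex_smul _ _ ((hPt.mul hPt).sub mdifferentiable_ramamaniQ),
    normalizedDerivOfComplex_sub _ _ (hPt.mul hPt) mdifferentiable_ramamaniQ,
    normalizedDerivOfComplex_mul _ _ hPt hPt, D_ramamaniPt, D_ramamaniQ]
  ext z
  simp only [Pi.add_apply, Pi.sub_apply, Pi.smul_apply, Pi.mul_apply, smul_eq_mul]
  ring

lemma D_D_ramamaniD :
    D (D ramamaniD) =
      (4 : ℂ)⁻¹ • (((5 : ℂ) • (ramamaniP * ramamaniP) - ramamaniQ) * ramamaniD) := by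
  rw [D_ramamaniD, normalizedDerivOfComplex_mul _ _ mdifferentiable_ramamaniP
    mdifferentiable_ramamaniD, D_ramamaniP, D_ramamaniD]
  ext z
  simp only [Pi.add_apply, Pi.sub_apply, Pi.smul_apply, Pi.mul_apply, smul_eq_mul]
  ring

lemma D_D_D_ramamaniD :
    D (D (D ramamaniD)) = (4 : ℂ)⁻¹ • (((15 / 2 : ℂ) • (ramamaniP * ramamaniP * ramamaniP) -
      (9 / 2 : ℂ) • (ramamaniP * ramamaniQ) + ramamaniPt * ramamaniQ) * ramamaniD) := by
  have hP := mdifferentiable_ramamaniP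
  have h5 : MDiff ((5 : ℂ) • (ramamaniP * ramamaniP)) := (hP.mul hP).const_smul _
  have h5Q := h5.sub mdifferentiable_ramamaniQ
  rw [D_D_ramamaniD, normalizedDerivOfComplex_smul _ _ (h5Q.mul mdifferentiable_ramamaniD),
    normalizedDerivOfComplex_mul _ _ h5Q mdifferentiable_ramamaniD,
    normalizedDerivOfComplex_sub _ _ h5 mdifferentiable_ramamaniQ,
    normalizedDerivOfComplex_smul _ _ (hP.mul hP), normalizedDerivOfComplex_mul _ _ hP hP,
    D_ramamaniP, D_ramamaniQ, D_ramamaniD]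
  ext z
  simp only [Pi.add_apply, Pi.sub_apply, Pi.smul_apply, Pi.mul_apply, smul_eq_mul]
  ring

/-! ### Lambert series -/

/-- The Lambert series `∑ nᵏ rⁿ / (1 - rⁿ)` over `n ≥ 1`. -/
def lambertSeries (k : ℕ) (r : ℂ) : ℂ :=
  ∑' n : ℕ, ((n : ℂ) + 1) ^ k * r ^ (n + 1) / (1 - r ^ (n + 1))

section Lambert

variable {r : ℂ}

lemma tsum_sigma_mul_pow_eq_lambertSeries (k : ℕ) (hr : ‖r‖ < 1) :
    ∑' n : ℕ+, (ArithmeticFunction.sigma k n : ℂ) * r ^ (n : ℕ) = lambertSeries k r := by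
  rw [← tsum_pow_div_one_sub_eq_tsum_sigma hr k,
    tsum_pnat_eq_tsum_succ (f := fun n : ℕ ↦ (n : ℂ) ^ k * r ^ n / (1 - r ^ n))]
  simp only [lambertSeries, Nat.cast_succ]

lemma hasSum_lambertSeries (k : ℕ) (hr : ‖r‖ < 1) :
    HasSum (fun n : ℕ ↦ ((n : ℂ) + 1) ^ k * r ^ (n + 1) / (1 - r ^ (n + 1)))
      (lambertSeries k r) := by
  have hsum := summable_norm_pow_mul_geometric_div_one_sub k hr
  rw [← summable_nat_add_iff 1] at hsum
  simp only [Nat.cast_add, Nat.cast_one] at hsum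
  exact hsum.hasSum

lemma tsum_pow_div_one_add_eq_lambertSeries (k : ℕ) (hr : ‖r‖ < 1) :
    ∑' n : ℕ, ((n : ℂ) + 1) ^ k * r ^ (n + 1) / (1 + r ^ (n + 1)) =
      lambertSeries k r - 2 * lambertSeries k (r ^ 2) := by
  have hr2 : ‖r ^ 2‖ < 1 := by
    rw [norm_pow]
    exact pow_lt_one₀ (norm_nonneg _) hr two_ne_zero
  rw [← ((hasSum_lambertSeries k hr).sub ((hasSum_lambertSeries k hr2).mul_left 2)).tsum_eq]
  refine tsum_congr fun n ↦ ?_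
  have hpow : ‖r ^ (n + 1)‖ < 1 := by
    rw [norm_pow]
    exact pow_lt_one₀ (norm_nonneg _) hr n.succ_ne_zero
  rw [pow_right_comm]
  generalize r ^ (n + 1) = u at hpow ⊢
  have hsub : 1 - u ≠ 0 := sub_ne_zero.mpr fun h ↦ by simp [← h] at hpow
  have hadd : 1 + u ≠ 0 := fun h ↦ by simp [eq_neg_of_add_eq_zero_right h] at hpow
  rw [show 1 - u ^ 2 = (1 - u) * (1 + u) by ring]
  field_simp
  ring

lemma tsum_neg_one_pow_mul_eq_lambertSeries (k : ℕ) (hr : ‖r‖ < 1) :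
    ∑' n : ℕ, (-1 : ℂ) ^ (n + 1) * ((n : ℂ) + 1) ^ k * r ^ (n + 1) / (1 - r ^ (n + 1)) =
      2 ^ (k + 1) * lambertSeries k (r ^ 2) - lambertSeries k r := by
  set a : ℕ → ℂ := fun n ↦ ((n : ℂ) + 1) ^ k * r ^ (n + 1) / (1 - r ^ (n + 1)) with ha
  have hsum : HasSum a (lambertSeries k r) := hasSum_lambertSeries k hr
  have heven : Summable fun n ↦ a (2 * n) :=
    hsum.summable.comp_injective (mul_right_injective₀ two_ne_zero)
  have hodd : Summable fun n ↦ a (2 * n + 1) :=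
    hsum.summable.comp_injective (i := fun n ↦ 2 * n + 1) fun m n h ↦ by simpa using h
  have hsplit := (heven.hasSum.even_add_odd hodd.hasSum).unique hsum
  have halt : HasSum (fun n ↦ (-1 : ℂ) ^ (n + 1) * a n)
      (-∑' n, a (2 * n) + ∑' n, a (2 * n + 1)) :=
    (heven.hasSum.neg.congr_fun fun n ↦ by simp [pow_succ, pow_mul]).even_add_odd
      (hodd.hasSum.congr_fun fun n ↦ by simp [pow_succ, pow_mul])
  have hodd_eq : ∑' n, a (2 * n + 1) = 2 ^ k * lambertSeries k (r ^ 2) := by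
    rw [lambertSeries, ← tsum_mul_left]
    refine tsum_congr fun n ↦ ?_
    simp only [ha]
    rw [← pow_mul, show 2 * n + 1 + 1 = 2 * (n + 1) by ring]
    push_cast
    rw [show (2 * (n : ℂ) + 1 + 1) = 2 * (n + 1) by ring, mul_pow]
    ring
  have hterm (n : ℕ) : (-1 : ℂ) ^ (n + 1) * ((n : ℂ) + 1) ^ k * r ^ (n + 1) / (1 - r ^ (n + 1)) =
      (-1) ^ (n + 1) * a n := by ring
  rw [tsum_congr hterm, halt.tsum_eq]
  linear_combination 2 * hodd_eq - hsplit

end Lambert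

lemma norm_qq_lt_one (z : ℍ) : ‖qq z‖ < 1 := norm_exp_two_pi_I_lt_one z

lemma E2_eq_lambertSeries (z : ℍ) : E2 z = 1 - 24 * lambertSeries 1 (qq z) := by
  rw [EisensteinSeries.E2_eq_tsum_cexp,
    ← tsum_sigma_mul_pow_eq_lambertSeries 1 (norm_qq_lt_one z)]
  rfl

lemma E₄_eq_lambertSeries (z : ℍ) : E₄ z = 1 + 240 * lambertSeries 3 (qq z) := by
  rw [← tsum_sigma_mul_pow_eq_lambertSeries 3 (norm_qq_lt_one z)]
  have hE₄ := EisensteinSeries.q_expansion_bernoulli (k := 4) (by norm_num) (by decide) z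
  rw [bernoulli_eq_bernoulli'_of_ne_one (by norm_num), bernoulli'_four] at hE₄
  refine hE₄.trans ?_
  simp only [zpow_natCast, qq]
  norm_num

lemma qq_scaleUp_smul (N : ℕ) [NeZero N] (z : ℍ) : qq (scaleUp N • z : ℍ) = qq z ^ N := by
  rw [coe_scaleUp_smul, qq, qq, ← Complex.exp_nat_mul]
  congr 1
  ring

lemma EPt_eq_ramamaniPt (z : ℍ) : EPt z = ramamaniPt z := by
  have htsum := tsum_pow_div_one_add_eq_lambertSeries 1 (norm_qq_lt_one z)
  simp only [pow_one] at htsum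
  rw [EPt, htsum, ramamaniPt, Pi.sub_apply, slash_scaleUp_apply, E2_eq_lambertSeries,
    E2_eq_lambertSeries, qq_scaleUp_smul]
  rw [Nat.cast_ofNat, show (2 - 1 : ℤ) = 1 from rfl, zpow_one]
  ring

lemma EQ_eq_ramamaniQ (z : ℍ) : EQ z = ramamaniQ z := by
  rw [EQ, tsum_neg_one_pow_mul_eq_lambertSeries 3 (norm_qq_lt_one z), ramamaniQ]
  simp only [Pi.smul_apply, Pi.sub_apply, slash_scaleUp_apply, E₄_eq_lambertSeries,
    qq_scaleUp_smul, smul_eq_mul, Nat.cast_ofNat, show (4 - 1 : ℤ) = 3 from rfl]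
  norm_cast
  ring

lemma ED_eq_ramamaniD (z : ℍ) : ED z = ramamaniD z := by
  simp only [ED, EPt_eq_ramamaniPt, EQ_eq_ramamaniQ, ramamaniD, Pi.smul_apply, Pi.sub_apply,
    Pi.mul_apply, smul_eq_mul]
  ring

lemma nderiv_eq_normalizedDerivOfComplex {F : ℂ → ℂ} {f : ℍ → ℂ} (h : ∀ z : ℍ, F z = f z)
    (z : ℍ) : nderiv F z = D f z := by
  rw [nderiv, normalizedDerivOfComplex]
  congr 1
  refine Filter.EventuallyEq.deriv_eq ?_
  filter_upwards [isOpen_upperHalfPlaneSet.mem_nhds z.im_pos] with w hw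
  rw [Function.comp_apply, ofComplex_apply_of_im_pos hw]
  exact h ⟨w, hw⟩

/-- The weight-four modular form `𝒟` on `Γ₀(2)` satisfies a third-order nonlinear ODE. -/
theorem ED_third_order_ODE :
    ∀ τ : ℂ, 0 < τ.im →
      4 * ED τ ^ 4 * (nderiv (nderiv (nderiv ED)) τ) ^ 2 -
      6 * ED τ ^ 2 * nderiv ED τ * (6 * ED τ * nderiv (nderiv ED) τ - 5 * (nderiv ED τ) ^ 2) *
        nderiv (nderiv (nderiv ED)) τ +
      16 * ED τ ^ 3 * (nderiv (nderiv ED) τ) ^ 3 -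
      ED τ ^ 2 * (256 * ED τ ^ 3 - 21 * (nderiv ED τ) ^ 2) * (nderiv (nderiv ED) τ) ^ 2 +
      20 * ED τ * (nderiv ED τ) ^ 2 * (32 * ED τ ^ 3 - 3 * (nderiv ED τ) ^ 2) *
        nderiv (nderiv ED) τ +
      25 * (nderiv ED τ) ^ 6 - 400 * ED τ ^ 3 * (nderiv ED τ) ^ 4 = 0 := by
  intro τ hτ
  have hD₁ := nderiv_eq_normalizedDerivOfComplex ED_eq_ramamaniD
  have hD₂ := nderiv_eq_normalizedDerivOfComplex hD₁
  have hD₃ := nderiv_eq_normalizedDerivOfComplex hD₂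
  lift τ to ℍ using hτ
  rw [hD₃, hD₂, hD₁, ED_eq_ramamaniD, D_D_D_ramamaniD, D_D_ramamaniD, D_ramamaniD, ramamaniD]
  simp only [Pi.add_apply, Pi.sub_apply, Pi.smul_apply, Pi.mul_apply, smul_eq_mul]
  ring
end
end

section
/- The weight-eight cusp form 𝒟̃ = 𝒟𝒬 on Γ₀(2) satisfies the third-order nonlinear ODE: for every τ ∈ ℍ, 16𝒟̃⁴(𝒟̃''')² − 30𝒟̃²𝒟̃'(4𝒟̃𝒟̃'' − 3(𝒟̃')²)𝒟̃''' + 32𝒟̃³(𝒟̃'')³ + 117𝒟̃²(𝒟̃')²(𝒟̃'')² − 8𝒟̃(16𝒟̃⁵ + 27(𝒟̃')⁴)𝒟̃'' + 81(𝒟̃')⁶ + 144𝒟̃⁵(𝒟̃')² = 0. -/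
open Complex

noncomputable section

/-- The weight-eight cusp form `𝒟̃ = 𝒟𝒬` on `Γ₀(2)`. -/
def EDt : ℂ → ℂ := fun τ => ED τ * EQ τ

/-!
Write `P = 𝒫̃`, let `R = (E₂(τ) + 2 E₂(2τ)) / 3` and `W = 2𝒬 - P²`. These satisfy a system of
Ramanujan type, `8 R' = R² - P²`, `4 P' = R P - W`, `2 W' = R W - P³`, and since
`256 𝒟̃ = P⁴ - W²`, the logarithmic derivative of `𝒟̃` is `R`. The successive derivatives of `𝒟̃`
are thus `𝒟̃` times polynomials in `P`, `R`, `W`, and eliminating these three functions gives the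
differential equation.

Each equation of the system, like the identity `5 P² = E₄(τ) + 4 E₄(2τ)` behind the Fricke symmetry
of `W`, says that a form on `Γ₀(2)` of weight less than eight, an eigenfunction of the Fricke
involution that vanishes at `i∞`, is zero. Its norm `f(z) f(z/2) f((z+1)/2)` to the full modular
group is a form of weight less than 24 vanishing to order two at the cusp, hence zero.
-/

section

open UpperHalfPlane hiding I
open Filter Asymptotics Metric
open scoped Real Topology MatrixGroups ModularForm Manifold

/-! ### Lambert series -/

section Lambert

variable {𝕜 : Type*} [NontriviallyNormedField 𝕜]

/-- The Lambert series `∑ₙ nᵏ qⁿ / (1 - qⁿ)` over `n ≥ 1`. -/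
def lambertSum (k : ℕ) (q : 𝕜) : 𝕜 :=
  ∑' n : ℕ, ((n : 𝕜) + 1) ^ k * q ^ (n + 1) / (1 - q ^ (n + 1))

lemma one_sub_pow_ne_zero_of_norm_lt_one {q : 𝕜} (hq : ‖q‖ < 1) {n : ℕ} (hn : n ≠ 0) :
    1 - q ^ n ≠ 0 :=
  sub_ne_zero.mpr fun h ↦ (pow_lt_one₀ (norm_nonneg q) hq hn).ne (by simp [← norm_pow, ← h])

lemma one_add_pow_ne_zero_of_norm_lt_one {q : 𝕜} (hq : ‖q‖ < 1) {n : ℕ} (hn : n ≠ 0) :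
    1 + q ^ n ≠ 0 := by
  have h := one_sub_pow_ne_zero_of_norm_lt_one hq (mul_ne_zero hn two_ne_zero)
  rw [pow_mul, show 1 - (q ^ n) ^ 2 = (1 - q ^ n) * (1 + q ^ n) by ring] at h
  exact right_ne_zero_of_mul h

lemma lambertSum_zero (k : ℕ) : lambertSum k (0 : 𝕜) = 0 := by
  simp [lambertSum]

variable [CompleteSpace 𝕜]

lemma tsum_neg_one_pow_succ_mul {f : ℕ → 𝕜} (hf : Summable f) :
    ∑' n, (-1) ^ (n + 1) * f n = 2 * ∑' n, f (2 * n + 1) - ∑' n, f n := by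
  have heven : HasSum (fun n ↦ f (2 * n)) (∑' n, f (2 * n)) :=
    (hf.comp_injective fun a b h ↦ by simpa using h).hasSum
  have hodd : HasSum (fun n ↦ f (2 * n + 1)) (∑' n, f (2 * n + 1)) :=
    (hf.comp_injective fun a b h ↦ by simpa using h).hasSum
  have halt : HasSum (fun n ↦ (-1) ^ (n + 1) * f n)
      (-∑' n, f (2 * n) + ∑' n, f (2 * n + 1)) := by
    refine HasSum.even_add_odd ?_ ?_
    · simpa [pow_succ, pow_mul] using heven.neg
    · simpa [pow_succ, pow_mul] using! hodd
  have hsplit := tsum_even_add_odd heven.summable hodd.summable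
  rw [halt.tsum_eq, ← hsplit]
  ring

lemma summable_lambertSum (k : ℕ) {q : 𝕜} (hq : ‖q‖ < 1) :
    Summable fun n : ℕ ↦ ((n : 𝕜) + 1) ^ k * q ^ (n + 1) / (1 - q ^ (n + 1)) := by
  have h := summable_norm_pow_mul_geometric_div_one_sub k hq
  simpa only [Function.comp_def, Nat.cast_add, Nat.cast_one] using
    h.comp_injective (add_left_injective 1)

lemma lambertSum_eq_tsum_sigma [NormSMulClass ℤ 𝕜] (k : ℕ) {q : 𝕜} (hq : ‖q‖ < 1) :
    lambertSum k q = ∑' n : ℕ+, (ArithmeticFunction.sigma k n : 𝕜) * q ^ (n : ℕ) := by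
  rw [← tsum_pow_div_one_sub_eq_tsum_sigma hq k,
    tsum_pnat_eq_tsum_succ (f := fun n : ℕ ↦ (n : 𝕜) ^ k * q ^ n / (1 - q ^ n))]
  simp [lambertSum]

lemma tsum_div_one_add_pow_eq_lambertSum (k : ℕ) {q : 𝕜} (hq : ‖q‖ < 1) :
    ∑' n : ℕ, ((n : 𝕜) + 1) ^ k * q ^ (n + 1) / (1 + q ^ (n + 1)) =
      lambertSum k q - 2 * lambertSum k (q ^ 2) := by
  have hq2 : ‖q ^ 2‖ < 1 := by
    simpa only [norm_pow] using pow_lt_one₀ (norm_nonneg q) hq two_ne_zero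
  rw [lambertSum, lambertSum, ← tsum_mul_left,
    ← (summable_lambertSum k hq).tsum_sub ((summable_lambertSum k hq2).mul_left 2)]
  refine tsum_congr fun n ↦ ?_
  have hsub := one_sub_pow_ne_zero_of_norm_lt_one hq n.succ_ne_zero
  have hadd := one_add_pow_ne_zero_of_norm_lt_one hq n.succ_ne_zero
  rw [Nat.succ_eq_add_one] at hsub hadd
  rw [pow_right_comm q 2,
    show 1 - (q ^ (n + 1)) ^ 2 = (1 - q ^ (n + 1)) * (1 + q ^ (n + 1)) by ring]
  generalize q ^ (n + 1) = x at hsub hadd ⊢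
  field_simp
  ring

lemma tsum_neg_one_pow_mul_eq_lambertSum (k : ℕ) {q : 𝕜} (hq : ‖q‖ < 1) :
    ∑' n : ℕ, (-1 : 𝕜) ^ (n + 1) * ((n : 𝕜) + 1) ^ k * q ^ (n + 1) / (1 - q ^ (n + 1)) =
      2 ^ (k + 1) * lambertSum k (q ^ 2) - lambertSum k q := by
  simp only [mul_assoc ((-1 : 𝕜) ^ _), mul_div_assoc ((-1 : 𝕜) ^ _)]
  rw [tsum_neg_one_pow_succ_mul (summable_lambertSum k hq), pow_succ', mul_assoc, lambertSum,
    lambertSum, ← tsum_mul_left (a := (2 : 𝕜) ^ k)]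
  congr! 4 with n
  rw [← pow_mul, show 2 * (n + 1) = 2 * n + 1 + 1 by ring, mul_div_assoc, mul_div_assoc,
    ← mul_assoc, ← mul_pow]
  push_cast
  ring_nf

end Lambert

lemma norm_lambertSum_term_le (k n : ℕ) {q : ℂ} {r : ℝ} (hqr : ‖q‖ ≤ r) (hr : r < 1) :
    ‖((n : ℂ) + 1) ^ k * q ^ (n + 1) / (1 - q ^ (n + 1))‖ ≤
      ((n : ℝ) + 1) ^ k * r ^ (n + 1) / (1 - r ^ (n + 1)) := by
  have hpow : ‖q‖ ^ (n + 1) ≤ r ^ (n + 1) := by gcongr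
  have hden : 1 - r ^ (n + 1) ≤ ‖1 - q ^ (n + 1)‖ := by
    have := norm_sub_norm_le (1 : ℂ) (q ^ (n + 1))
    rw [norm_one, norm_pow] at this
    linarith
  have hpos : 0 < 1 - r ^ (n + 1) :=
    sub_pos.mpr (pow_lt_one₀ ((norm_nonneg q).trans hqr) hr n.succ_ne_zero)
  have hnum : ‖((n : ℂ) + 1) ^ k‖ = ((n : ℝ) + 1) ^ k := by
    rw [norm_pow]; norm_cast
  rw [norm_div, norm_mul, hnum, norm_pow]
  have : 0 ≤ r := (norm_nonneg q).trans hqr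
  gcongr

lemma differentiableOn_lambertSum (k : ℕ) :
    DifferentiableOn ℂ (lambertSum k) (ball (0 : ℂ) 1) := by
  intro q hq
  obtain ⟨r, hqr, hr⟩ := exists_between (mem_ball_zero_iff.mp hq)
  have hsum : Summable fun n : ℕ ↦ ((n : ℝ) + 1) ^ k * r ^ (n + 1) / (1 - r ^ (n + 1)) :=
    summable_lambertSum k (by rwa [Real.norm_of_nonneg ((norm_nonneg q).trans hqr.le)])
  refine ((differentiableOn_tsum_of_summable_norm hsum (fun n w hw ↦ ?_) isOpen_ball fun n w hw ↦
    norm_lambertSum_term_le k n (mem_ball_zero_iff.mp hw).le hr).differentiableAt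
      (isOpen_ball.mem_nhds (mem_ball_zero_iff.mpr hqr))).differentiableWithinAt
  have hw1 : ‖w‖ < 1 := (mem_ball_zero_iff.mp hw).trans hr
  have := one_sub_pow_ne_zero_of_norm_lt_one hw1 n.succ_ne_zero
  fun_prop (disch := assumption)

/-! ### Functions analytic in `q` -/

lemma qq_eq_qParam (τ : ℂ) : qq τ = Function.Periodic.qParam 1 τ := by
  simp [qq, Function.Periodic.qParam]

lemma qq_mem_ball {τ : ℂ} (hτ : 0 < τ.im) : qq τ ∈ ball (0 : ℂ) 1 := by
  rw [mem_ball_zero_iff, qq_eq_qParam]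
  exact Function.Periodic.norm_qParam_lt_one one_pos hτ

lemma tendsto_qq : Tendsto qq (comap Complex.im atTop) (𝓝 0) :=
  ((Function.Periodic.qParam_tendsto one_pos).mono_right nhdsWithin_le_nhds).congr fun τ ↦
    (qq_eq_qParam τ).symm

lemma qq_add_one (τ : ℂ) : qq (τ + 1) = qq τ := by
  rw [qq, qq, mul_add, mul_one, Complex.exp_add, exp_two_pi_mul_I, mul_one]

lemma qq_two_mul (τ : ℂ) : qq (2 * τ) = qq τ ^ 2 := by
  rw [qq, qq, ← Complex.exp_nat_mul]
  congr 1
  push_cast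
  ring

lemma hasDerivAt_qq (τ : ℂ) : HasDerivAt qq (2 * π * I * qq τ) τ :=
  ((hasDerivAt_id τ).const_mul (2 * π * I)).cexp.congr_deriv (by simp [qq, mul_comm])

lemma nderiv_eq_of_hasDerivAt {f : ℂ → ℂ} {d τ : ℂ} (h : HasDerivAt f (2 * π * I * d) τ) :
    nderiv f τ = d := by
  rw [nderiv, h.deriv, inv_mul_cancel_left₀ two_pi_I_ne_zero]

lemma nderiv_congr {f g : ℂ → ℂ} (hfg : Set.EqOn f g upperHalfPlaneSet) :
    Set.EqOn (nderiv f) (nderiv g) upperHalfPlaneSet := fun τ hτ ↦ by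
  rw [nderiv, nderiv, (hfg.eventuallyEq_of_mem (isOpen_upperHalfPlaneSet.mem_nhds hτ)).deriv_eq]

lemma hasDerivAt_nderiv {f : ℂ → ℂ} (hf : DifferentiableOn ℂ f upperHalfPlaneSet) {τ : ℂ}
    (hτ : 0 < τ.im) : HasDerivAt f (2 * π * I * nderiv f τ) τ := by
  rw [nderiv, mul_inv_cancel_left₀ two_pi_I_ne_zero]
  exact (hf.differentiableAt (isOpen_upperHalfPlaneSet.mem_nhds hτ)).hasDerivAt

/-- `f` is, on the upper half-plane, an analytic function of `q` on the open unit disc, with value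
`c` at the cusp `q = 0`. -/
def HasCuspValue (f : ℂ → ℂ) (c : ℂ) : Prop :=
  ∃ F : ℂ → ℂ, DifferentiableOn ℂ F (ball 0 1) ∧ F 0 = c ∧ ∀ τ : ℂ, 0 < τ.im → f τ = F (qq τ)

namespace HasCuspValue

variable {f g : ℂ → ℂ} {a b : ℂ}

lemma congr (hf : HasCuspValue f a) (hgf : Set.EqOn g f upperHalfPlaneSet) (hba : b = a) :
    HasCuspValue g b := by
  obtain ⟨F, hF, hF0, hfF⟩ := hf
  exact ⟨F, hF, hF0.trans hba.symm, fun τ hτ ↦ (hgf hτ).trans (hfF τ hτ)⟩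

lemma const_mul (c : ℂ) (hf : HasCuspValue f a) : HasCuspValue (fun τ ↦ c * f τ) (c * a) := by
  obtain ⟨F, hF, rfl, hfF⟩ := hf
  exact ⟨fun q ↦ c * F q, hF.const_mul c, rfl, fun τ hτ ↦ by simp only [hfF τ hτ]⟩

lemma add (hf : HasCuspValue f a) (hg : HasCuspValue g b) :
    HasCuspValue (fun τ ↦ f τ + g τ) (a + b) := by
  obtain ⟨F, hF, rfl, hfF⟩ := hf
  obtain ⟨G, hG, rfl, hgG⟩ := hg
  exact ⟨fun q ↦ F q + G q, hF.add hG, rfl, fun τ hτ ↦ by simp only [hfF τ hτ, hgG τ hτ]⟩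

lemma sub (hf : HasCuspValue f a) (hg : HasCuspValue g b) :
    HasCuspValue (fun τ ↦ f τ - g τ) (a - b) := by
  obtain ⟨F, hF, rfl, hfF⟩ := hf
  obtain ⟨G, hG, rfl, hgG⟩ := hg
  exact ⟨fun q ↦ F q - G q, hF.sub hG, rfl, fun τ hτ ↦ by simp only [hfF τ hτ, hgG τ hτ]⟩

lemma mul (hf : HasCuspValue f a) (hg : HasCuspValue g b) :
    HasCuspValue (fun τ ↦ f τ * g τ) (a * b) := by
  obtain ⟨F, hF, rfl, hfF⟩ := hf
  obtain ⟨G, hG, rfl, hgG⟩ := hg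
  exact ⟨fun q ↦ F q * G q, hF.mul hG, rfl, fun τ hτ ↦ by simp only [hfF τ hτ, hgG τ hτ]⟩

lemma pow (hf : HasCuspValue f a) (n : ℕ) : HasCuspValue (fun τ ↦ f τ ^ n) (a ^ n) := by
  obtain ⟨F, hF, rfl, hfF⟩ := hf
  exact ⟨fun q ↦ F q ^ n, hF.pow n, rfl, fun τ hτ ↦ by simp only [hfF τ hτ]⟩

lemma comp_two_mul (hf : HasCuspValue f a) : HasCuspValue (fun τ ↦ f (2 * τ)) a := by
  obtain ⟨F, hF, rfl, hfF⟩ := hf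
  refine ⟨fun q ↦ F (q ^ 2), hF.comp (by fun_prop) fun q hq ↦ ?_, by simp, fun τ hτ ↦ ?_⟩
  · rw [mem_ball_zero_iff] at hq ⊢
    simpa only [norm_pow] using pow_lt_one₀ (norm_nonneg q) hq two_ne_zero
  · simp only [hfF (2 * τ) (by simpa using hτ), qq_two_mul]

lemma apply_add_one (hf : HasCuspValue f a) {τ : ℂ} (hτ : 0 < τ.im) : f (τ + 1) = f τ := by
  obtain ⟨F, -, -, hfF⟩ := hf
  rw [hfF _ (by simpa using hτ), hfF _ hτ, qq_add_one]

lemma nderiv (hf : HasCuspValue f a) : HasCuspValue (nderiv f) 0 := by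
  obtain ⟨F, hF, -, hfF⟩ := hf
  refine ⟨fun q ↦ q * deriv F q, differentiableOn_id.mul (hF.deriv isOpen_ball), by simp,
    fun τ hτ ↦ ?_⟩
  have hF' := (hF.differentiableAt (isOpen_ball.mem_nhds (qq_mem_ball hτ))).hasDerivAt
  rw [nderiv_congr hfF hτ]
  exact nderiv_eq_of_hasDerivAt ((hF'.comp τ (hasDerivAt_qq τ)).congr_deriv (by ring))

lemma differentiableOn (hf : HasCuspValue f a) : DifferentiableOn ℂ f upperHalfPlaneSet := by
  obtain ⟨F, hF, -, hfF⟩ := hf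
  exact (hF.comp (fun τ _ ↦ (hasDerivAt_qq τ).differentiableAt.differentiableWithinAt)
    fun τ hτ ↦ qq_mem_ball hτ).congr hfF

lemma tendsto (hf : HasCuspValue f a) : Tendsto f (comap Complex.im atTop) (𝓝 a) := by
  obtain ⟨F, hF, rfl, hfF⟩ := hf
  refine ((hF.differentiableAt (ball_mem_nhds 0 one_pos)).continuousAt.tendsto.comp
    tendsto_qq).congr' ?_
  filter_upwards [tendsto_comap.eventually_gt_atTop 0] with τ hτ using (hfF τ hτ).symm

lemma isBigO_exp (hf : HasCuspValue f 0) :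
    f =O[comap Complex.im atTop] fun τ ↦ Real.exp (-2 * π * τ.im) := by
  obtain ⟨F, hF, hF0, hfF⟩ := hf
  have hO : (fun τ ↦ F (qq τ) - F 0) =O[comap Complex.im atTop] fun τ ↦ qq τ - 0 :=
    (hF.differentiableAt (ball_mem_nhds 0 one_pos)).isBigO_sub.comp_tendsto tendsto_qq
  refine (hO.congr' ?_ ?_).trans (isBigO_of_le _ ?_) (g := qq)
  · filter_upwards [tendsto_comap.eventually_gt_atTop 0] with τ hτ
    rw [hF0, sub_zero, hfF τ hτ]
  · simp [EventuallyEq]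
  · intro τ
    rw [qq_eq_qParam, Function.Periodic.norm_qParam]
    simp

end HasCuspValue

/-! ### The Eisenstein series `E₂` and `E₄` -/

/-- The quasimodular Eisenstein series `E₂`, as a function on `ℂ`. -/
def eisensteinE2 (τ : ℂ) : ℂ := 1 - 24 * lambertSum 1 (qq τ)

/-- The Eisenstein series `E₄`, as a function on `ℂ`. -/
def eisensteinE4 (τ : ℂ) : ℂ := 1 + 240 * lambertSum 3 (qq τ)

lemma hasCuspValue_eisensteinE2 : HasCuspValue eisensteinE2 1 :=
  ⟨fun q ↦ 1 - 24 * lambertSum 1 q, ((differentiableOn_lambertSum 1).const_mul 24).const_sub 1,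
    by simp [lambertSum_zero], fun _ _ ↦ rfl⟩

lemma hasCuspValue_eisensteinE4 : HasCuspValue eisensteinE4 1 :=
  ⟨fun q ↦ 1 + 240 * lambertSum 3 q, ((differentiableOn_lambertSum 3).const_mul 240).const_add 1,
    by simp [lambertSum_zero], fun _ _ ↦ rfl⟩

lemma eisensteinE2_coe (τ : ℍ) : eisensteinE2 τ = EisensteinSeries.E2 τ := by
  rw [EisensteinSeries.E2_eq_tsum_cexp, eisensteinE2,
    lambertSum_eq_tsum_sigma 1 (mem_ball_zero_iff.mp (qq_mem_ball τ.im_pos))]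
  rfl

lemma eisensteinE4_coe (τ : ℍ) : eisensteinE4 τ = ModularForm.E (by norm_num : 3 ≤ 4) τ := by
  rw [EisensteinSeries.q_expansion_bernoulli _ (by decide), eisensteinE4,
    lambertSum_eq_tsum_sigma 3 (mem_ball_zero_iff.mp (qq_mem_ball τ.im_pos)),
    bernoulli_eq_bernoulli'_of_ne_one (by norm_num), bernoulli'_four]
  simp only [zpow_natCast, qq]
  norm_num

lemma neg_one_div_im_pos {z : ℂ} (hz : 0 < z.im) : 0 < (-1 / z).im := by
  simpa [neg_div, inv_neg] using im_inv_neg_coe_pos ⟨z, hz⟩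

lemma coe_modular_S_smul (τ : ℍ) : ((ModularGroup.S • τ : ℍ) : ℂ) = -1 / τ := by
  rw [modular_S_smul, coe_mk, inv_neg, neg_div, one_div]

lemma slash_S_apply_coe {f : ℍ → ℂ} {g : ℂ → ℂ} (hfg : ∀ τ : ℍ, g τ = f τ) (k : ℕ) (τ : ℍ) :
    g (-1 / τ) = (f ∣[(k : ℤ)] ModularGroup.S) τ * (τ : ℂ) ^ k := by
  rw [ModularForm.SL_slash_apply, ModularGroup.denom_S, ← coe_modular_S_smul, hfg, zpow_neg,
    zpow_natCast, inv_mul_cancel_right₀ (pow_ne_zero _ τ.ne_zero)]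

lemma eisensteinE2_neg_one_div {z : ℂ} (hz : 0 < z.im) :
    eisensteinE2 (-1 / z) = z ^ 2 * eisensteinE2 z + 12 * z / (2 * π * I) := by
  lift z to ℍ using hz
  have hz0 := z.ne_zero
  rw [slash_S_apply_coe eisensteinE2_coe 2, Nat.cast_ofNat, EisensteinSeries.E2_slash_action,
    eisensteinE2_coe]
  simp only [Pi.sub_apply, Pi.smul_apply, EisensteinSeries.D2_S, riemannZeta_two, smul_eq_mul]
  have hπ : (π : ℂ) ≠ 0 := mod_cast Real.pi_ne_zero
  have hI := I_ne_zero
  field_simp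
  linear_combination (-12) * I_sq

lemma eisensteinE4_neg_one_div {z : ℂ} (hz : 0 < z.im) :
    eisensteinE4 (-1 / z) = z ^ 4 * eisensteinE4 z := by
  lift z to ℍ using hz
  have hS := SlashInvariantFormClass.slash_action_eq (ModularForm.E (by norm_num : 3 ≤ 4)) _
    ⟨ModularGroup.S, rfl⟩
  rw [slash_S_apply_coe eisensteinE4_coe 4, eisensteinE4_coe, mul_comm]
  exact congrArg (_ * ·) (congrFun hS z)

/-! ### Level-one forms of high order at the cusp -/

lemma isZeroAtImInfty_of_isBigO_exp {f : ℍ → ℂ} {a : ℝ} (ha : a < 0)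
    (hf : f =O[atImInfty] fun τ ↦ Real.exp (a * τ.im)) : IsZeroAtImInfty f :=
  hf.trans_tendsto (Real.tendsto_exp_atBot.comp (tendsto_comap.const_mul_atTop_of_neg ha))

-- A form vanishing at the cusp is `Δ` times a form of weight `k - 12`, whose decay is slower by
-- one factor of `q`.
lemma modularForm_eq_zero_of_isBigO_exp {n : ℕ} {k : ℤ} (hk : k < 12 * n) (f : ModularForm 𝒮ℒ k)
    (hf : f =O[atImInfty] fun τ ↦ Real.exp (-2 * π * n * τ.im)) : f = 0 := by
  induction n generalizing k with
  | zero =>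
    exact rank_zero_iff_forall_zero.mp
      (ModularForm.levelOne_neg_weight_rank_zero (by simpa using hk)) f
  | succ n ih =>
    have hzero : IsZeroAtImInfty f := isZeroAtImInfty_of_isBigO_exp
      (mul_neg_of_neg_of_pos (by linarith [Real.pi_pos]) (Nat.cast_pos.mpr n.succ_pos)) hf
    have hcoeff : (qExpansion 1 f).coeff 0 = 0 := by
      simp [qExpansion_coeff, hzero.cuspFunction_apply_zero one_pos]
    let g := ModularForm.toCuspForm f hcoeff
    have hg : CuspForm.discriminantEquiv g = 0 := by
      refine ih (by push_cast at hk; linarith) _ ?_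
      have hΔ := ModularForm.exp_isBigO_discriminant.inv_rev
        (Eventually.of_forall fun τ h ↦ absurd h (Real.exp_ne_zero _))
      refine (hf.mul hΔ).congr (fun τ ↦ (div_eq_mul_inv _ _).symm) fun τ ↦ ?_
      rw [← Real.exp_neg, ← Real.exp_add]
      congr 1
      push_cast
      ring
    have hg0 : g = 0 := CuspForm.discriminantEquiv.map_eq_zero_iff.mp hg
    ext τ
    exact DFunLike.congr_fun hg0 τ

/-! ### The Fricke involution -/

lemma div_two_im_pos {z : ℂ} (hz : 0 < z.im) : 0 < (z / 2).im := by
  simpa using hz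

lemma fricke_im_pos {z : ℂ} (hz : 0 < z.im) : 0 < (-1 / (2 * z)).im :=
  neg_one_div_im_pos (by simpa using hz)

lemma ne_zero_of_im_pos {z : ℂ} (hz : 0 < z.im) : z ≠ 0 :=
  ne_zero (⟨z, hz⟩ : ℍ)

/-- `f` is an eigenfunction of the Fricke involution `τ ↦ -1 / (2τ)` in weight `2 * m`, with
eigenvalue `ε` in the normalization for which the possible eigenvalues are `±1`. -/
def IsFricke (ε : ℂ) (m : ℕ) (f : ℂ → ℂ) : Prop :=
  ∀ τ : ℂ, 0 < τ.im → f (-1 / (2 * τ)) = ε * (2 * τ ^ 2) ^ m * f τ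

namespace IsFricke

variable {ε : ℂ} {m : ℕ} {f g : ℂ → ℂ}

lemma const_mul (c : ℂ) (hf : IsFricke ε m f) : IsFricke ε m fun τ ↦ c * f τ := fun τ hτ ↦ by
  simp only [hf τ hτ, mul_left_comm]

lemma add (hf : IsFricke ε m f) (hg : IsFricke ε m g) : IsFricke ε m fun τ ↦ f τ + g τ :=
  fun τ hτ ↦ by simp only [hf τ hτ, hg τ hτ, mul_add]

lemma sub (hf : IsFricke ε m f) (hg : IsFricke ε m g) : IsFricke ε m fun τ ↦ f τ - g τ :=
  fun τ hτ ↦ by simp only [hf τ hτ, hg τ hτ, mul_sub]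

lemma pow (hf : IsFricke ε m f) (n : ℕ) : IsFricke (ε ^ n) (m * n) fun τ ↦ f τ ^ n :=
  fun τ hτ ↦ by simp only [hf τ hτ, mul_pow, pow_mul]

-- The matrix `(1, 0; 2, 1)` is the conjugate of a translation by the Fricke involution.
lemma apply_div_two_mul_add_one (hf : IsFricke ε m f) (hε : ε ^ 2 = 1)
    (hT : ∀ τ : ℂ, 0 < τ.im → f (τ + 1) = f τ) {τ : ℂ} (hτ : 0 < τ.im) :
    f (τ / (2 * τ + 1)) = (2 * τ + 1) ^ (2 * m) * f τ := by
  have hτ0 := ne_zero_of_im_pos hτ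
  set u := -1 / (2 * τ) - 1 with hu
  have hu_im : 0 < u.im := by simpa [hu] using fricke_im_pos hτ
  have huτ : 2 * u * τ = -(2 * τ + 1) := by
    rw [hu]
    field_simp
    ring
  have hu0 := ne_zero_of_im_pos hu_im
  have hfu : f u = ε * (2 * τ ^ 2) ^ m * f τ := by
    rw [← hf τ hτ, ← hT u hu_im, hu, sub_add_cancel]
  calc f (τ / (2 * τ + 1)) = f (-1 / (2 * u)) := by
        rw [← neg_eq_iff_eq_neg.mpr huτ]
        congr 1
        field_simp
    _ = ε ^ 2 * ((2 * u * τ) ^ 2) ^ m * f τ := by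
        rw [hf u hu_im, hfu, show (2 * u * τ) ^ 2 = 2 * u ^ 2 * (2 * τ ^ 2) by ring,
          mul_pow (2 * u ^ 2)]
        ring
    _ = (2 * τ + 1) ^ (2 * m) * f τ := by rw [hε, huτ, neg_sq, one_mul, pow_mul]

end IsFricke

/-- The norm of `f` from `Γ₀(2)` to the full modular group: the product of the translates of `f`
by representatives of the three cosets. -/
def levelOneNorm (f : ℂ → ℂ) : ℂ → ℂ := fun z ↦ f z * f (z / 2) * f ((z + 1) / 2)

section LevelOneNorm

variable {ε : ℂ} {m : ℕ} {f : ℂ → ℂ}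

lemma levelOneNorm_add_one (hT : ∀ τ : ℂ, 0 < τ.im → f (τ + 1) = f τ) {z : ℂ} (hz : 0 < z.im) :
    levelOneNorm f (z + 1) = levelOneNorm f z := by
  rw [levelOneNorm, levelOneNorm, hT z hz, show (z + 1 + 1) / 2 = z / 2 + 1 by ring,
    hT _ (div_two_im_pos hz), mul_right_comm]

lemma levelOneNorm_neg_one_div (hf : IsFricke ε m f) (hε : ε ^ 2 = 1)
    (hT : ∀ τ : ℂ, 0 < τ.im → f (τ + 1) = f τ) {z : ℂ} (hz : 0 < z.im) :
    levelOneNorm f (-1 / z) = z ^ (6 * m) * levelOneNorm f z := by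
  have hz0 := ne_zero_of_im_pos hz
  have hinfty : f (-1 / z) = ε * (2 * (z / 2) ^ 2) ^ m * f (z / 2) := by
    rw [← hf _ (div_two_im_pos hz), mul_div_cancel₀ z two_ne_zero]
  have hzero : f (-1 / z / 2) = ε * (2 * z ^ 2) ^ m * f z := by
    rw [← hf z hz, div_div, mul_comm]
  have hone : f ((-1 / z + 1) / 2) = z ^ (2 * m) * f ((z + 1) / 2) := by
    have hz1 : 0 < ((z - 1) / 2).im := div_two_im_pos (by simpa using hz)
    have h := hf.apply_div_two_mul_add_one hε hT hz1
    rw [← hT _ hz1, mul_div_cancel₀ _ two_ne_zero, sub_add_cancel] at h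
    convert h using 2
    · field_simp
      ring
    · ring_nf
  simp only [levelOneNorm]
  calc f (-1 / z) * f (-1 / z / 2) * f ((-1 / z + 1) / 2)
      = ε ^ 2 * ((2 * (z / 2) ^ 2) * (2 * z ^ 2) * z ^ 2) ^ m *
          (f z * f (z / 2) * f ((z + 1) / 2)) := by
        rw [hinfty, hzero, hone, mul_pow (2 * (z / 2) ^ 2 * (2 * z ^ 2)), mul_pow (2 * (z / 2) ^ 2),
          pow_mul z 2]
        ring
    _ = z ^ (6 * m) * (f z * f (z / 2) * f ((z + 1) / 2)) := by
        rw [hε, one_mul, pow_mul z 6]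
        congr 2
        ring

lemma differentiableOn_levelOneNorm (hf : DifferentiableOn ℂ f upperHalfPlaneSet) :
    DifferentiableOn ℂ (levelOneNorm f) upperHalfPlaneSet :=
  (hf.mul (hf.comp (by fun_prop) fun _ hz ↦ div_two_im_pos hz)).mul
    (hf.comp (by fun_prop) fun _ hz ↦ div_two_im_pos (by simpa using hz))

lemma isBigO_levelOneNorm {r : ℝ} (hf : f =O[comap Complex.im atTop] fun τ ↦ Real.exp (r * τ.im)) :
    (fun τ : ℍ ↦ levelOneNorm f τ) =O[atImInfty] fun τ ↦ Real.exp (2 * r * τ.im) := by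
  have hscale {g : ℂ → ℂ} (hg : ∀ τ, (g τ).im = τ.im / 2) :
      Tendsto g (comap Complex.im atTop) (comap Complex.im atTop) := by
    rw [tendsto_comap_iff]
    exact (tendsto_comap.atTop_div_const two_pos).congr fun τ ↦ (hg τ).symm
  have hhalf := hf.comp_tendsto (hscale (g := fun τ ↦ τ / 2) (by simp))
  have hhalf' := hf.comp_tendsto (hscale (g := fun τ ↦ (τ + 1) / 2) (by simp))
  refine (((hf.mul hhalf).mul hhalf').comp_tendsto tendsto_coe_atImInfty).congr_right fun τ ↦ ?_
  simp only [Function.comp_apply, ← Real.exp_add, Complex.div_ofNat_im, Complex.add_im,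
    Complex.one_im, coe_im]
  ring_nf

lemma slash_levelOneNorm (hf : IsFricke ε m f) (hε : ε ^ 2 = 1)
    (hT : ∀ τ : ℂ, 0 < τ.im → f (τ + 1) = f τ) (γ : SL(2, ℤ)) :
    (fun τ : ℍ ↦ levelOneNorm f τ) ∣[((6 * m : ℕ) : ℤ)] γ = fun τ : ℍ ↦ levelOneNorm f τ := by
  refine SlashInvariantForm.slash_action_generators_SL2Z ?_ ?_ γ
  · ext τ
    have h := slash_S_apply_coe (f := fun τ : ℍ ↦ levelOneNorm f τ) (fun _ ↦ rfl) (6 * m) τ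
    rw [levelOneNorm_neg_one_div hf hε hT τ.im_pos, mul_comm] at h
    exact mul_right_cancel₀ (pow_ne_zero _ τ.ne_zero) h.symm
  · ext τ
    rw [ModularForm.SL_slash_apply, modular_T_smul, ModularGroup.denom_apply, coe_vadd, add_comm,
      ofReal_one, levelOneNorm_add_one hT τ.im_pos]
    simp [ModularGroup.T]

/-- `levelOneNorm f` as a modular form, for a Fricke eigenfunction `f` that is analytic in `q`. -/
def levelOneNormForm {a : ℂ} (hf : IsFricke ε m f) (hε : ε ^ 2 = 1) (ha : HasCuspValue f a) :
    ModularForm 𝒮ℒ ((6 * m : ℕ) : ℤ) where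
  toFun τ := levelOneNorm f τ
  slash_action_eq' := by
    rintro _ ⟨γ, rfl⟩
    exact slash_levelOneNorm hf hε (fun _ ↦ ha.apply_add_one) γ
  holo' := mdifferentiable_iff.mpr <|
    (differentiableOn_levelOneNorm ha.differentiableOn).congr fun z hz ↦ by
      simp [ofComplex_apply_of_im_pos hz]
  bdd_at_cusps' hc := by
    rw [Subgroup.IsArithmetic.isCusp_iff_isCusp_SL2Z] at hc
    rw [OnePoint.isBoundedAt_iff_forall_SL2Z hc]
    intro γ _
    rw [slash_levelOneNorm hf hε (fun _ ↦ ha.apply_add_one)]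
    have h : f =O[comap Complex.im atTop] fun τ ↦ Real.exp (0 * τ.im) := by
      simpa using ha.tendsto.isBigO_one ℝ
    simpa [IsBoundedAtImInfty, BoundedAtFilter, Pi.one_def] using isBigO_levelOneNorm h

lemma eqOn_zero_of_levelOneNorm_eq_zero (hf : DifferentiableOn ℂ f upperHalfPlaneSet)
    (h0 : Set.EqOn (levelOneNorm f) 0 upperHalfPlaneSet) : Set.EqOn f 0 upperHalfPlaneSet := by
  have hconn : IsPreconnected upperHalfPlaneSet := (convex_halfSpace_im_gt 0).isPreconnected
  have han := hf.analyticOnNhd isOpen_upperHalfPlaneSet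
  have han_half := (hf.comp (g := f) (f := fun z ↦ z / 2) (by fun_prop)
    fun _ hz ↦ div_two_im_pos hz).analyticOnNhd isOpen_upperHalfPlaneSet
  have han_half' := (hf.comp (g := f) (f := fun z ↦ (z + 1) / 2) (by fun_prop)
    fun _ hz ↦ div_two_im_pos (by simpa using hz)).analyticOnNhd isOpen_upperHalfPlaneSet
  intro z hz
  rcases (han.mul han_half).eq_zero_or_eq_zero_of_mul_eq_zero han_half' h0 hconn with h | h
  · rcases han.eq_zero_or_eq_zero_of_mul_eq_zero han_half h hconn with h | h
    · exact h z hz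
    · simpa using h (2 * z) (by simpa using hz)
  · simpa using h (2 * z - 1) (by simpa using hz)

lemma IsFricke.eq_zero (hf : IsFricke ε m f) (hε : ε ^ 2 = 1) (hm : m < 4)
    (h0 : HasCuspValue f 0) {τ : ℂ} (hτ : 0 < τ.im) : f τ = 0 := by
  have hN : levelOneNormForm hf hε h0 = 0 := by
    refine modularForm_eq_zero_of_isBigO_exp (n := 2) (by lia) _ ?_
    refine (isBigO_levelOneNorm h0.isBigO_exp).congr_right fun τ ↦ ?_
    push_cast
    ring_nf
  exact eqOn_zero_of_levelOneNorm_eq_zero h0.differentiableOn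
    (fun z hz ↦ DFunLike.congr_fun hN ⟨z, hz⟩) hτ

end LevelOneNorm

lemma nderiv_fricke {f : ℂ → ℂ} (hf : DifferentiableOn ℂ f upperHalfPlaneSet) {τ : ℂ}
    (hτ : 0 < τ.im) :
    nderiv f (-1 / (2 * τ)) = 2 * τ ^ 2 * nderiv (fun w ↦ f (-1 / (2 * w))) τ := by
  have hτ0 := ne_zero_of_im_pos hτ
  have hinv : HasDerivAt (fun w : ℂ ↦ -1 / (2 * w)) (1 / (2 * τ ^ 2)) τ := by
    refine ((hasDerivAt_const τ (-1 : ℂ)).fun_div ((hasDerivAt_id' τ).const_mul 2)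
      (mul_ne_zero two_ne_zero hτ0)).congr_deriv ?_
    field_simp
    ring
  have hcomp : HasDerivAt (fun w ↦ f (-1 / (2 * w)))
      (2 * π * I * (nderiv f (-1 / (2 * τ)) / (2 * τ ^ 2))) τ :=
    ((hasDerivAt_nderiv hf (fricke_im_pos hτ)).comp τ hinv).congr_deriv (by ring)
  rw [nderiv_eq_of_hasDerivAt hcomp]
  field_simp

/-! ### Modular forms on `Γ₀(2)` -/

/-- The quasimodular form of weight two on `Γ₀(2)` that turns out to be the logarithmic derivative
of `𝒟̃`. -/
def levelTwoE2 (τ : ℂ) : ℂ := 1 / 3 * (eisensteinE2 τ + 2 * eisensteinE2 (2 * τ))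

lemma hasCuspValue_levelTwoE2 : HasCuspValue levelTwoE2 1 :=
  ((hasCuspValue_eisensteinE2.add
    (hasCuspValue_eisensteinE2.comp_two_mul.const_mul 2)).const_mul (1 / 3)).congr
      (fun _ _ ↦ rfl) (by norm_num)

lemma EPt_eq {τ : ℂ} (hτ : 0 < τ.im) : EPt τ = 2 * eisensteinE2 (2 * τ) - eisensteinE2 τ := by
  have h := tsum_div_one_add_pow_eq_lambertSum 1 (mem_ball_zero_iff.mp (qq_mem_ball hτ))
  simp only [pow_one] at h
  rw [EPt, h, eisensteinE2, eisensteinE2, qq_two_mul]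
  ring

lemma EQ_eq {τ : ℂ} (hτ : 0 < τ.im) :
    EQ τ = 1 / 15 * (16 * eisensteinE4 (2 * τ) - eisensteinE4 τ) := by
  rw [EQ, tsum_neg_one_pow_mul_eq_lambertSum 3 (mem_ball_zero_iff.mp (qq_mem_ball hτ)),
    eisensteinE4, eisensteinE4, qq_two_mul]
  ring

lemma hasCuspValue_EPt : HasCuspValue EPt 1 :=
  ((hasCuspValue_eisensteinE2.comp_two_mul.const_mul 2).sub hasCuspValue_eisensteinE2).congr
    (fun _ ↦ EPt_eq) (by norm_num)

lemma hasCuspValue_EQ : HasCuspValue EQ 1 :=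
  (((hasCuspValue_eisensteinE4.comp_two_mul.const_mul 16).sub
    hasCuspValue_eisensteinE4).const_mul (1 / 15)).congr (fun _ ↦ EQ_eq) (by norm_num)

lemma eisensteinE2_fricke {τ : ℂ} (hτ : 0 < τ.im) :
    eisensteinE2 (-1 / (2 * τ)) = 4 * τ ^ 2 * eisensteinE2 (2 * τ) + 24 * τ / (2 * π * I) := by
  rw [eisensteinE2_neg_one_div (by simpa using hτ)]
  ring

lemma eisensteinE4_fricke {τ : ℂ} (hτ : 0 < τ.im) :
    eisensteinE4 (-1 / (2 * τ)) = 16 * τ ^ 4 * eisensteinE4 (2 * τ) := by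
  rw [eisensteinE4_neg_one_div (by simpa using hτ)]
  ring

lemma two_mul_fricke (τ : ℂ) : 2 * (-1 / (2 * τ)) = -1 / τ := by
  rw [mul_div_assoc', mul_div_mul_left _ _ two_ne_zero]

lemma levelTwoE2_fricke {τ : ℂ} (hτ : 0 < τ.im) :
    levelTwoE2 (-1 / (2 * τ)) = 2 * τ ^ 2 * levelTwoE2 τ + 16 * τ / (2 * π * I) := by
  simp only [levelTwoE2, eisensteinE2_fricke hτ, two_mul_fricke, eisensteinE2_neg_one_div hτ]
  ring

lemma isFricke_EPt : IsFricke (-1) 1 EPt := fun τ hτ ↦ by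
  rw [EPt_eq hτ, EPt_eq (fricke_im_pos hτ), eisensteinE2_fricke hτ, two_mul_fricke,
    eisensteinE2_neg_one_div hτ]
  ring

lemma EPt_sq {τ : ℂ} (hτ : 0 < τ.im) :
    EPt τ ^ 2 = 1 / 5 * (eisensteinE4 τ + 4 * eisensteinE4 (2 * τ)) := by
  have hE4 : IsFricke ((-1) ^ 2) 2
      fun τ ↦ 1 / 5 * (eisensteinE4 τ + 4 * eisensteinE4 (2 * τ)) := fun τ hτ ↦ by
    simp only [eisensteinE4_fricke hτ, two_mul_fricke, eisensteinE4_neg_one_div hτ]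
    ring
  have hcusp := (hasCuspValue_EPt.pow 2).sub ((hasCuspValue_eisensteinE4.add
    (hasCuspValue_eisensteinE4.comp_two_mul.const_mul 4)).const_mul (1 / 5))
  exact sub_eq_zero.mp (((isFricke_EPt.pow 2).sub hE4).eq_zero (by norm_num) (by norm_num)
    (hcusp.congr (Set.eqOn_refl _ _) (by norm_num)) hτ)

/-- The modular form of weight four on `Γ₀(2)` that spans, with `𝒫̃²`, the forms of that weight,
and on which the Fricke involution acts with the opposite sign. -/
def levelTwoE4 (τ : ℂ) : ℂ := 2 * EQ τ - EPt τ ^ 2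

lemma hasCuspValue_levelTwoE4 : HasCuspValue levelTwoE4 1 :=
  ((hasCuspValue_EQ.const_mul 2).sub (hasCuspValue_EPt.pow 2)).congr (fun _ _ ↦ rfl) (by norm_num)

lemma isFricke_levelTwoE4 : IsFricke (-1) 2 levelTwoE4 := by
  have heq {τ : ℂ} (hτ : 0 < τ.im) :
      levelTwoE4 τ = 1 / 3 * (4 * eisensteinE4 (2 * τ) - eisensteinE4 τ) := by
    rw [levelTwoE4, EQ_eq hτ, EPt_sq hτ]
    ring
  intro τ hτ
  rw [heq hτ, heq (fricke_im_pos hτ), eisensteinE4_fricke hτ, two_mul_fricke,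
    eisensteinE4_neg_one_div hτ]
  ring

/-! ### The differential system -/

lemma IsFricke.nderiv_sub_mul {ε : ℂ} {m : ℕ} {f : ℂ → ℂ} (hf : IsFricke ε m f)
    (hd : DifferentiableOn ℂ f upperHalfPlaneSet) :
    IsFricke ε (m + 1) fun τ ↦ nderiv f τ - m / 4 * (levelTwoE2 τ * f τ) := fun τ hτ ↦ by
  have hτ0 := ne_zero_of_im_pos hτ
  have hfactor : HasDerivAt (fun w : ℂ ↦ ε * (2 * w ^ 2) ^ m)
      (ε * ((2 * τ ^ 2) ^ m * (2 * m / τ))) τ := by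
    refine ((((hasDerivAt_pow 2 τ).const_mul 2).fun_pow m).const_mul ε).congr_deriv ?_
    cases m with
    | zero => simp
    | succ m =>
      push_cast
      field_simp
      ring
  have hderiv : nderiv (fun w ↦ f (-1 / (2 * w))) τ =
      ε * (2 * τ ^ 2) ^ m * (nderiv f τ + 2 * m / τ / (2 * π * I) * f τ) := by
    rw [nderiv_congr (g := fun w ↦ ε * (2 * w ^ 2) ^ m * f w) hf hτ]
    refine nderiv_eq_of_hasDerivAt ((hfactor.fun_mul (hasDerivAt_nderiv hd hτ)).congr_deriv ?_)
    field_simp [two_pi_I_ne_zero]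
    ring
  simp only [nderiv_fricke hd hτ, hderiv, hf τ hτ, levelTwoE2_fricke hτ]
  field_simp [two_pi_I_ne_zero]
  ring

lemma isFricke_nderiv_levelTwoE2_sub :
    IsFricke 1 2 fun τ ↦ nderiv levelTwoE2 τ - 1 / 8 * levelTwoE2 τ ^ 2 := fun τ hτ ↦ by
  have hτ0 := ne_zero_of_im_pos hτ
  have hd := hasCuspValue_levelTwoE2.differentiableOn
  have hderiv : nderiv (fun w ↦ levelTwoE2 (-1 / (2 * w))) τ =
      2 * τ ^ 2 * nderiv levelTwoE2 τ + 4 * τ / (2 * π * I) * levelTwoE2 τ +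
        16 / (2 * π * I) ^ 2 := by
    rw [nderiv_congr (fun w ↦ levelTwoE2_fricke) hτ]
    refine nderiv_eq_of_hasDerivAt (((((hasDerivAt_pow 2 τ).const_mul 2).fun_mul
      (hasDerivAt_nderiv hd hτ)).fun_add
      (((hasDerivAt_id' τ).const_mul 16).div_const (2 * π * I))).congr_deriv ?_)
    field_simp [two_pi_I_ne_zero]
    ring
  simp only [nderiv_fricke hd hτ, hderiv, levelTwoE2_fricke hτ]
  field_simp [two_pi_I_ne_zero]
  ring

lemma nderiv_levelTwoE2 {τ : ℂ} (hτ : 0 < τ.im) :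
    nderiv levelTwoE2 τ = 1 / 8 * (levelTwoE2 τ ^ 2 - EPt τ ^ 2) := by
  have hF : IsFricke 1 2 fun τ ↦
      nderiv levelTwoE2 τ - 1 / 8 * levelTwoE2 τ ^ 2 + 1 / 8 * EPt τ ^ 2 :=
    isFricke_nderiv_levelTwoE2_sub.add (by simpa using (isFricke_EPt.pow 2).const_mul (1 / 8))
  have hcusp := (hasCuspValue_levelTwoE2.nderiv.sub
    ((hasCuspValue_levelTwoE2.pow 2).const_mul (1 / 8))).add
      ((hasCuspValue_EPt.pow 2).const_mul (1 / 8))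
  linear_combination hF.eq_zero (by norm_num) (by norm_num)
    (hcusp.congr (Set.eqOn_refl _ _) (by norm_num)) hτ

lemma nderiv_EPt {τ : ℂ} (hτ : 0 < τ.im) :
    nderiv EPt τ = 1 / 4 * (levelTwoE2 τ * EPt τ - levelTwoE4 τ) := by
  have hF := (isFricke_EPt.nderiv_sub_mul hasCuspValue_EPt.differentiableOn).add
    (isFricke_levelTwoE4.const_mul (1 / 4))
  have hcusp := (hasCuspValue_EPt.nderiv.sub ((hasCuspValue_levelTwoE2.mul
    hasCuspValue_EPt).const_mul ((1 : ℕ) / 4))).add (hasCuspValue_levelTwoE4.const_mul (1 / 4))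
  have h := hF.eq_zero (by norm_num) (by norm_num)
    (hcusp.congr (Set.eqOn_refl _ _) (by norm_num)) hτ
  linear_combination (norm := (push_cast; ring)) h

lemma nderiv_levelTwoE4 {τ : ℂ} (hτ : 0 < τ.im) :
    nderiv levelTwoE4 τ = 1 / 2 * (levelTwoE2 τ * levelTwoE4 τ - EPt τ ^ 3) := by
  have hEPt : IsFricke (-1) 3 fun τ ↦ 1 / 2 * EPt τ ^ 3 := by
    simpa [Odd.neg_one_pow (by decide : Odd 3)] using (isFricke_EPt.pow 3).const_mul (1 / 2)
  have hF := (isFricke_levelTwoE4.nderiv_sub_mul hasCuspValue_levelTwoE4.differentiableOn).add hEPt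
  have hcusp := (hasCuspValue_levelTwoE4.nderiv.sub ((hasCuspValue_levelTwoE2.mul
    hasCuspValue_levelTwoE4).const_mul ((2 : ℕ) / 4))).add
      ((hasCuspValue_EPt.pow 3).const_mul (1 / 2))
  have h := hF.eq_zero (by norm_num) (by norm_num)
    (hcusp.congr (Set.eqOn_refl _ _) (by norm_num)) hτ
  linear_combination (norm := (push_cast; ring)) h

lemma hasDerivAt_levelTwoE2 {τ : ℂ} (hτ : 0 < τ.im) :
    HasDerivAt levelTwoE2 (2 * π * I * (1 / 8 * (levelTwoE2 τ ^ 2 - EPt τ ^ 2))) τ :=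
  nderiv_levelTwoE2 hτ ▸ hasDerivAt_nderiv hasCuspValue_levelTwoE2.differentiableOn hτ

lemma hasDerivAt_EPt {τ : ℂ} (hτ : 0 < τ.im) :
    HasDerivAt EPt (2 * π * I * (1 / 4 * (levelTwoE2 τ * EPt τ - levelTwoE4 τ))) τ :=
  nderiv_EPt hτ ▸ hasDerivAt_nderiv hasCuspValue_EPt.differentiableOn hτ

lemma EDt_eq (τ : ℂ) : EDt τ = 1 / 256 * (EPt τ ^ 4 - levelTwoE4 τ ^ 2) := by
  rw [EDt, ED, levelTwoE4]
  ring

lemma hasDerivAt_EDt {τ : ℂ} (hτ : 0 < τ.im) :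
    HasDerivAt EDt (2 * π * I * (levelTwoE2 τ * EDt τ)) τ := by
  have hE4 := hasDerivAt_nderiv hasCuspValue_levelTwoE4.differentiableOn hτ
  rw [nderiv_levelTwoE4 hτ] at hE4
  have h := (((hasDerivAt_EPt hτ).fun_pow 4).fun_sub (hE4.fun_pow 2)).const_mul (1 / 256)
  rw [funext EDt_eq]
  refine h.congr_deriv ?_
  push_cast
  ring

lemma nderiv_EDt {τ : ℂ} (hτ : 0 < τ.im) : nderiv EDt τ = levelTwoE2 τ * EDt τ :=
  nderiv_eq_of_hasDerivAt (hasDerivAt_EDt hτ)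

lemma nderiv_nderiv_EDt {τ : ℂ} (hτ : 0 < τ.im) :
    nderiv (nderiv EDt) τ = 1 / 8 * (9 * levelTwoE2 τ ^ 2 - EPt τ ^ 2) * EDt τ := by
  rw [nderiv_congr (fun _ ↦ nderiv_EDt) hτ]
  refine nderiv_eq_of_hasDerivAt
    (((hasDerivAt_levelTwoE2 hτ).fun_mul (hasDerivAt_EDt hτ)).congr_deriv ?_)
  ring

lemma nderiv_nderiv_nderiv_EDt {τ : ℂ} (hτ : 0 < τ.im) :
    nderiv (nderiv (nderiv EDt)) τ =
      1 / 32 * (45 * levelTwoE2 τ ^ 3 - 15 * levelTwoE2 τ * EPt τ ^ 2 +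
        2 * EPt τ * levelTwoE4 τ) * EDt τ := by
  rw [nderiv_congr (fun _ ↦ nderiv_nderiv_EDt) hτ]
  refine nderiv_eq_of_hasDerivAt ((((((hasDerivAt_levelTwoE2 hτ).fun_pow 2).const_mul 9).fun_sub
    ((hasDerivAt_EPt hτ).fun_pow 2)).const_mul (1 / 8)).fun_mul
      (hasDerivAt_EDt hτ) |>.congr_deriv ?_)
  push_cast
  ring

end

/-- The weight-eight cusp form `𝒟̃` on `Γ₀(2)` satisfies a third-order nonlinear ODE. -/
theorem EDt_third_order_ODE :
    ∀ τ : ℂ, 0 < τ.im →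
      16 * EDt τ ^ 4 * (nderiv (nderiv (nderiv EDt)) τ) ^ 2 -
      30 * EDt τ ^ 2 * nderiv EDt τ *
        (4 * EDt τ * nderiv (nderiv EDt) τ - 3 * (nderiv EDt τ) ^ 2) *
        nderiv (nderiv (nderiv EDt)) τ +
      32 * EDt τ ^ 3 * (nderiv (nderiv EDt) τ) ^ 3 +
      117 * EDt τ ^ 2 * (nderiv EDt τ) ^ 2 * (nderiv (nderiv EDt) τ) ^ 2 -
      8 * EDt τ * (16 * EDt τ ^ 5 + 27 * (nderiv EDt τ) ^ 4) * nderiv (nderiv EDt) τ +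
      81 * (nderiv EDt τ) ^ 6 + 144 * EDt τ ^ 5 * (nderiv EDt τ) ^ 2 = 0 := by
  intro τ hτ
  rw [nderiv_nderiv_nderiv_EDt hτ, nderiv_nderiv_EDt hτ, nderiv_EDt hτ]
  linear_combination 16 * EPt τ ^ 2 * EDt τ ^ 6 * EDt_eq τ
end
end
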